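/- arXiv:1703.09378 — 2 statements merged into one kernel-verified Lean document; each statement's English description precedes it below -/
import Mathlib

section
/- Let k ≥ 2 and let G be a finite 2-connected simple graph of order n ≥ 4 with minimum degree δ(G) ≥ k. Then G is k-color connectable and cc_k(G) = k. -/
open SimpleGraph

/-- `c` is a `k`-color connecting edge-coloring of `G`: between every pair of distinct
vertices there is a path whose edges use at least `k` different colors. -/
def SimpleGraph.IsKColorConnecting {V : Type*} (G : SimpleGraph V) (k : ℕ)
    (c : Sym2 V → ℕ) : Prop :=
  ∀ u v : V, u ≠ v → ∃ p : G.Walk u v, p.IsPath ∧ k ≤ (p.edges.map c).toFinset.card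

/-- `G` is `k`-color connectable: it admits a `k`-color connecting coloring. -/
def SimpleGraph.KColorConnectable {V : Type*} (G : SimpleGraph V) (k : ℕ) : Prop :=
  ∃ c : Sym2 V → ℕ, G.IsKColorConnecting k c

/-- The `k`-color connection number `cc_k(G)`: the minimum number of colors used on the
edges of `G` by a `k`-color connecting coloring. -/
noncomputable def SimpleGraph.ccConn {V : Type*} (G : SimpleGraph V) (k : ℕ) : ℕ :=
  sInf {n : ℕ | ∃ c : Sym2 V → ℕ, G.IsKColorConnecting k c ∧ (c '' G.edgeSet).ncard = n}

/-- A graph is 2-connected if it has at least 3 vertices, is connected, and remains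
connected after deleting any single vertex. -/
def SimpleGraph.IsTwoConnected {V : Type*} (G : SimpleGraph V) : Prop :=
  3 ≤ Nat.card V ∧ G.Connected ∧ ∀ v : V, (G.induce {v}ᶜ).Connected

/-!
A cycle of length at least `2 * k`, colored twice around with `k` colors, contains for any two of
its vertices an arc with all `k` colors. Dirac's circumference theorem supplies such a cycle when
`2 * k ≤ |V|`. If `|V| < 2 * k`, then `G - z` still satisfies Dirac's condition for a Hamiltonian
cycle, and `z` together with this cycle is a wheel in which `z` has at least `k` spokes. There a
spoke gets the color of the rim edge leaving its end, so that a path which skips a rim edge by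
passing through `z` sees the missing color on a spoke.

Such a coloring of a subgraph spreads to the whole 2-connected graph along ears: a path from a new
vertex reaches the old part at either end of its ear, hence at a vertex from which the old part
can be traversed with all colors.

For the circumference, take a longest path. Its ends have all their neighbors on it. If the
neighborhoods of the ends cross, the path closes up to a cycle, either through all vertices or
skipping only a gap free of neighbors. Otherwise two disjoint links over the region between the
neighborhoods close up to a cycle through both ends and all their neighbors.
-/

section

variable {V : Type*} {G : SimpleGraph V}

/-! ### Paths with prescribed vertex set -/

/-- Some path of `G` from `u` to `v` has vertex set exactly `S` and traverses every edge in `E`,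
possibly among others. Recording only these two sets lets paths be cut and glued without handling
walks. -/
def HasPath (G : SimpleGraph V) (u v : V) (S : Set V) (E : Set (Sym2 V)) : Prop :=
  ∃ p : G.Walk u v, p.IsPath ∧ (∀ x, x ∈ p.support ↔ x ∈ S) ∧ ∀ e ∈ E, e ∈ p.edges

namespace HasPath

variable {u v w x y : V} {S S' : Set V} {E E' : Set (Sym2 V)}

theorem of_isPath {p : G.Walk u v} (hp : p.IsPath) : HasPath G u v {x | x ∈ p.support} ∅ :=
  ⟨p, hp, fun _ => Iff.rfl, by simp⟩

theorem refl (G : SimpleGraph V) (u : V) : HasPath G u u {u} ∅ :=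
  ⟨Walk.nil, by simp, by simp, by simp⟩

theorem of_adj (h : G.Adj u v) : HasPath G u v {u, v} {s(u, v)} :=
  ⟨Walk.cons h Walk.nil, by simp [h.ne], by simp, by simp⟩

theorem symm : HasPath G u v S E → HasPath G v u S E
  | ⟨p, hp, hS, hE⟩ => ⟨p.reverse, hp.reverse, by simpa using hS, by simpa using hE⟩

theorem mono (h : HasPath G u v S E) (hE : E' ⊆ E) : HasPath G u v S E' :=
  let ⟨p, hp, hS, hpE⟩ := h
  ⟨p, hp, hS, fun e he => hpE e (hE he)⟩

theorem forget_edges (h : HasPath G u v S E) : HasPath G u v S ∅ :=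
  h.mono (Set.empty_subset E)

theorem left_mem : HasPath G u v S E → u ∈ S
  | ⟨p, _, hS, _⟩ => (hS u).1 p.start_mem_support

theorem right_mem (h : HasPath G u v S E) : v ∈ S :=
  h.symm.left_mem

theorem mem_of_mem_edge {e : Sym2 V} (h : HasPath G u v S E) (he : e ∈ E) (hx : x ∈ e) :
    x ∈ S := by
  obtain ⟨p, _, hS, hE⟩ := h
  obtain ⟨y, rfl⟩ := Sym2.mem_iff_exists.1 hx
  exact (hS x).1 (p.fst_mem_support_of_mem_edges (hE _ he))

theorem append (h : HasPath G u y S E) (h' : HasPath G y w S' E')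
    (hSS' : ∀ x ∈ S, x ∈ S' → x = y) : HasPath G u w (S ∪ S') (E ∪ E') := by
  obtain ⟨p, hp, hS, hE⟩ := h
  obtain ⟨q, hq, hS', hE'⟩ := h'
  refine ⟨p.append q, ?_, ?_, ?_⟩
  · rw [Walk.isPath_def, Walk.support_append, List.nodup_append]
    refine ⟨hp.support_nodup, hq.support_nodup.tail, ?_⟩
    rintro a ha _ hb rfl
    obtain rfl := hSS' a ((hS a).1 ha) ((hS' a).1 (List.mem_of_mem_tail hb))
    have hnodup := hq.support_nodup
    rw [← Walk.cons_tail_support] at hnodup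
    exact (List.nodup_cons.1 hnodup).1 hb
  · intro x
    rw [Walk.mem_support_append_iff, hS, hS', Set.mem_union]
  · rintro e he
    rw [Walk.edges_append, List.mem_append]
    exact he.imp (hE e) (hE' e)

theorem cons (ha : G.Adj u v) (h : HasPath G v w S E) (hu : u ∉ S) :
    HasPath G u w (insert u S) (insert s(u, v) E) := by
  obtain ⟨p, hp, hS, hE⟩ := h
  refine ⟨Walk.cons ha p, (Walk.cons_isPath_iff ha p).2 ⟨hp, fun hup => hu ((hS u).1 hup)⟩,
    fun x => by simp [hS], ?_⟩
  rintro e (rfl | he)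
  · simp
  · simp [hE e he]

theorem append_adj (h : HasPath G u v S E) (ha : G.Adj v x) (h' : HasPath G x w S' E')
    (hSS' : Disjoint S S') : HasPath G u w (S ∪ S') (insert s(v, x) (E ∪ E')) := by
  have hv : v ∉ S' := Set.disjoint_left.1 hSS' h.right_mem
  have hglue := h.append (h'.cons ha hv) (by
    rintro z hz (rfl | hz')
    · rfl
    · exact absurd hz' (Set.disjoint_left.1 hSS' hz))
  rwa [Set.union_insert, ← Set.insert_union, Set.insert_eq_of_mem h.right_mem,
    Set.union_insert] at hglue

theorem exists_adj_start (h : HasPath G u v S E) (hne : u ≠ v) :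
    ∃ w, G.Adj u w ∧ w ∈ S ∧ HasPath G w v (S \ {u}) ∅ := by
  obtain ⟨p, hp, hS, -⟩ := h
  cases p with
  | nil => exact absurd rfl hne
  | @cons _ w _ ha p =>
    obtain ⟨hp, hu⟩ := (Walk.cons_isPath_iff ha p).1 hp
    refine ⟨w, ha, (hS w).1 (by simp), p, hp, fun x => ?_, by simp⟩
    rw [Set.mem_sdiff, ← hS, Set.mem_singleton_iff, Walk.support_cons, List.mem_cons]
    exact ⟨fun hx => ⟨Or.inr hx, fun hxu => hu (hxu ▸ hx)⟩, fun ⟨hx, hxu⟩ => hx.resolve_left hxu⟩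

theorem exists_isPath_length (h : HasPath G u v S E) :
    ∃ p : G.Walk u v, p.IsPath ∧ S.ncard = p.length + 1 := by
  classical
  obtain ⟨p, hp, hS, _⟩ := h
  refine ⟨p, hp, ?_⟩
  have hsupp : S = (p.support.toFinset : Set V) := by ext x; simp [hS]
  rw [hsupp, Set.ncard_coe_finset, List.toFinset_card_of_nodup hp.support_nodup,
    Walk.length_support]

end HasPath

/-- The vertices `v 0, …, v l` are distinct and consecutive ones are adjacent: a path given by its
sequence of vertices, for index arithmetic. Nothing is said about `v i` for `l < i`. -/
structure IsPathSeq (G : SimpleGraph V) (v : ℕ → V) (l : ℕ) : Prop where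
  injOn : Set.InjOn v (Set.Iic l)
  adj : ∀ i < l, G.Adj (v i) (v (i + 1))

/-- The edge from `v i` to `v (i + 1)` of a sequence of vertices. -/
abbrev stepEdge (v : ℕ → V) (i : ℕ) : Sym2 V := s(v i, v (i + 1))

theorem hasPath_image_Icc {v : ℕ → V} {a b : ℕ} (hab : a ≤ b) (hinj : Set.InjOn v (Set.Icc a b))
    (hadj : ∀ i, a ≤ i → i < b → G.Adj (v i) (v (i + 1))) :
    HasPath G (v a) (v b) (v '' Set.Icc a b) (stepEdge v '' Set.Ico a b) := by
  induction b, hab using Nat.le_induction with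
  | base => simpa using HasPath.refl G (v a)
  | succ b hab ih =>
    have hprefix := ih (hinj.mono (Set.Icc_subset_Icc_right b.le_succ))
      fun i ha hi => hadj i ha (hi.trans b.lt_succ_self)
    have hlast : v (b + 1) ∉ v '' Set.Icc a b := by
      rintro ⟨r, ⟨har, hrb⟩, hr⟩
      have := hinj ⟨har, by omega⟩ ⟨by omega, le_rfl⟩ hr
      omega
    have hpath := (hprefix.symm.cons (hadj b hab b.lt_succ_self).symm hlast).symm
    rwa [← Set.image_insert_eq, Set.insert_Icc_right_eq_Icc_add_one (by omega), Sym2.eq_swap,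
      show s(v b, v (b + 1)) = stepEdge v b from rfl, ← Set.image_insert_eq,
      Set.insert_Ico_right_eq_Ico_add_one hab] at hpath

namespace IsPathSeq

variable {v : ℕ → V} {l a b a' b' : ℕ}

theorem hasPath (hv : IsPathSeq G v l) (hab : a ≤ b) (hb : b ≤ l) :
    HasPath G (v a) (v b) (v '' Set.Icc a b) ∅ :=
  (hasPath_image_Icc hab (hv.injOn.mono fun _ hi => hi.2.trans hb)
    fun i _ hi => hv.adj i (hi.trans_le hb)).forget_edges

theorem disjoint_image_Icc (hv : IsPathSeq G v l) (hb : b < a') (hb' : b' ≤ l) :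
    Disjoint (v '' Set.Icc a b) (v '' Set.Icc a' b') := by
  rw [Set.disjoint_left]
  rintro _ ⟨i, ⟨_, hi⟩, rfl⟩ ⟨j, ⟨hj, hj'⟩, hij⟩
  have := hv.injOn (hj'.trans hb') (show i ≤ l by omega) hij
  omega

theorem reverse (hv : IsPathSeq G v l) : IsPathSeq G (fun i => v (l - i)) l where
  injOn i hi j hj hij := by
    have := hv.injOn (Nat.sub_le l i) (Nat.sub_le l j) hij
    simp only [Set.mem_Iic] at hi hj
    omega
  adj i hi := by
    have hadj := hv.adj (l - (i + 1)) (by omega)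
    rw [show l - (i + 1) + 1 = l - i by omega] at hadj
    exact hadj.symm

end IsPathSeq

theorem isPathSeq_getVert {u w : V} {p : G.Walk u w} (hp : p.IsPath) :
    IsPathSeq G p.getVert p.length where
  injOn := hp.getVert_injOn
  adj _ hi := p.adj_getVert_succ hi

namespace HasPath

variable {u v w x y : V} {S : Set V} {E : Set (Sym2 V)}

theorem exists_isPathSeq (h : HasPath G u w S E) :
    ∃ (v : ℕ → V) (l : ℕ), IsPathSeq G v l ∧ v 0 = u ∧ v l = w ∧ v '' Set.Icc 0 l = S := by
  obtain ⟨p, hp, hS, -⟩ := h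
  refine ⟨p.getVert, p.length, isPathSeq_getVert hp, p.getVert_zero, p.getVert_length, ?_⟩
  ext x
  rw [← hS, Walk.mem_support_iff_exists_getVert]
  simp [and_comm]

theorem exists_first_mem (h : HasPath G u v S E) {X : Set V} (hX : (S ∩ X).Nonempty) :
    ∃ y ∈ X, ∃ S₁ S₂, HasPath G u y S₁ ∅ ∧ HasPath G y v S₂ ∅ ∧ S₁ ∪ S₂ = S ∧
      (∀ x ∈ S₁, x ∈ S₂ → x = y) ∧ ∀ x ∈ S₁, x ∈ X → x = y := by
  classical
  obtain ⟨v, l, hv, rfl, rfl, rfl⟩ := h.exists_isPathSeq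
  have hex : ∃ i, i ≤ l ∧ v i ∈ X := by
    obtain ⟨_, ⟨i, hi, rfl⟩, hiX⟩ := hX
    exact ⟨i, hi.2, hiX⟩
  obtain ⟨hr, hrX⟩ := Nat.find_spec hex
  have hmin : ∀ i ≤ l, v i ∈ X → Nat.find hex ≤ i := fun i hi hiX => Nat.find_min' hex ⟨hi, hiX⟩
  generalize Nat.find hex = r at hr hrX hmin
  refine ⟨v r, hrX, _, _, hv.hasPath r.zero_le hr, hv.hasPath hr le_rfl, ?_, ?_, ?_⟩
  · rw [← Set.image_union, Set.Icc_union_Icc_eq_Icc r.zero_le hr]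
  · rintro _ ⟨i, ⟨_, hi⟩, rfl⟩ ⟨j, ⟨hj, hj'⟩, hij⟩
    have := hv.injOn hj' (hi.trans hr) hij
    rw [show i = r by omega]
  · rintro _ ⟨i, ⟨_, hi⟩, rfl⟩ hiX
    rw [hi.antisymm (hmin i (hi.trans hr) hiX)]

theorem exists_split (h : HasPath G u v S E) (hy : y ∈ S) :
    ∃ S₁ S₂, HasPath G u y S₁ ∅ ∧ HasPath G y v S₂ ∅ ∧ S₁ ∪ S₂ = S ∧
      ∀ x ∈ S₁, x ∈ S₂ → x = y := by
  obtain ⟨_, rfl, S₁, S₂, h₁, h₂, hS, hinter, -⟩ := h.exists_first_mem ⟨y, hy, Set.mem_singleton y⟩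
  exact ⟨S₁, S₂, h₁, h₂, hS, hinter⟩

theorem exists_split_two (h : HasPath G u v S E) (hx : x ∈ S) (hy : y ∈ S) (hxy : x ≠ y) :
    (∃ S₁ S₂, S₁ ⊆ S ∧ S₂ ⊆ S ∧ HasPath G u x S₁ ∅ ∧ HasPath G y v S₂ ∅ ∧ Disjoint S₁ S₂) ∨
      ∃ S₁ S₂, S₁ ⊆ S ∧ S₂ ⊆ S ∧ HasPath G u y S₁ ∅ ∧ HasPath G x v S₂ ∅ ∧ Disjoint S₁ S₂ := by
  obtain ⟨S₁, S₂, h₁, h₂, rfl, hinter⟩ := h.exists_split hx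
  rcases hy with hy | hy
  · obtain ⟨T₁, T₂, g₁, g₂, rfl, hinter'⟩ := h₁.exists_split hy
    refine Or.inr ⟨T₁, S₂, fun z hz => Or.inl (Or.inl hz), Set.subset_union_right, g₁, h₂,
      Set.disjoint_left.2 fun z hz hz' => ?_⟩
    obtain rfl := hinter z (Or.inl hz) hz'
    exact hxy (hinter' z hz g₂.right_mem)
  · obtain ⟨T₁, T₂, g₁, g₂, rfl, hinter'⟩ := h₂.exists_split hy
    refine Or.inl ⟨S₁, T₂, Set.subset_union_left, fun z hz => Or.inr (Or.inr hz), h₁, g₂,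
      Set.disjoint_left.2 fun z hz hz' => ?_⟩
    obtain rfl := hinter z hz (Or.inr hz')
    exact hxy (hinter' z g₁.left_mem hz')

end HasPath

/-! ### Ears -/

theorem exists_hasPath_avoiding (hG : G.IsTwoConnected) {d u v : V} (hu : u ≠ d) (hv : v ≠ d) :
    ∃ S, d ∉ S ∧ HasPath G u v S ∅ := by
  obtain ⟨p, hp⟩ := (hG.2.2 d).preconnected.exists_isPath ⟨u, hu⟩ ⟨v, hv⟩
  let f := Embedding.induce (G := G) {d}ᶜ
  refine ⟨_, fun hd => ?_, HasPath.of_isPath (Walk.IsPath.map (f := f.toHom) f.injective hp)⟩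
  obtain ⟨⟨x, hx⟩, -, hxd⟩ := List.mem_map.1 (Walk.support_map f.toHom p ▸ hd)
  exact hx hxd

theorem exists_adj_notMem (hG : G.Connected) {D : Set V} (hD : D.Nonempty)
    {w : V} (hw : w ∉ D) : ∃ d ∈ D, ∃ x ∉ D, G.Adj d x := by
  obtain ⟨a, ha⟩ := hD
  obtain ⟨p⟩ := hG.preconnected a w
  obtain ⟨e, -, h₁, h₂⟩ := p.exists_boundary_dart D ha hw
  exact ⟨e.fst, h₁, e.snd, h₂, e.adj⟩

theorem exists_ear (hG : G.IsTwoConnected) {D : Set V} (hD : D.Nontrivial) {w : V} (hw : w ∉ D) :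
    ∃ d ∈ D, ∃ y ∈ D, d ≠ y ∧ ∃ T, HasPath G d y T ∅ ∧ (∀ x ∈ T, x ∈ D → x = d ∨ x = y) ∧
      ¬ T ⊆ D := by
  obtain ⟨d, hd, x, hx, hdx⟩ := exists_adj_notMem hG.2.1 hD.nonempty hw
  obtain ⟨d', hd', hne⟩ := hD.exists_ne d
  obtain ⟨S, hdS, hS⟩ := exists_hasPath_avoiding hG hdx.ne' hne
  obtain ⟨y, hy, T, T', hT, -, rfl, -, hTD⟩ := hS.exists_first_mem ⟨d', hS.right_mem, hd'⟩
  have hdT : d ∉ T := fun h => hdS (Or.inl h)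
  refine ⟨d, hd, y, hy, fun h => hdT (h ▸ hT.right_mem), _, (hT.cons hdx hdT).forget_edges, ?_,
    fun hsub => hx (hsub (Or.inr hT.left_mem))⟩
  exact fun z hz hzD => hz.imp_right fun hzT => hTD z hzT hzD

/-- Any two distinct vertices of `D` are joined by a path inside `D` that traverses a set of edges
with property `P`. For `P` monotone the property propagates along ears. -/
def PairwiseLinked (G : SimpleGraph V) (P : Set (Sym2 V) → Prop) (D : Set V) : Prop :=
  ∀ ⦃u⦄, u ∈ D → ∀ ⦃v⦄, v ∈ D → u ≠ v → ∃ S ⊆ D, ∃ E, HasPath G u v S E ∧ P E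

namespace PairwiseLinked

variable {P : Set (Sym2 V) → Prop} {D T : Set V} {d y z v : V}

theorem exists_hasPath_from_ear (hP : Monotone P) (hD : PairwiseLinked G P D) (hd : d ∈ D)
    (hy : y ∈ D) (hdy : d ≠ y) (hT : HasPath G d y T ∅) (hTD : ∀ x ∈ T, x ∈ D → x = d ∨ x = y)
    (hz : z ∈ T) (hzD : z ∉ D) (hv : v ∈ D) :
    ∃ S ⊆ D ∪ T, ∃ E, HasPath G z v S E ∧ P E := by
  obtain ⟨T₁, T₂, h₁, h₂, rfl, hinter⟩ := hT.exists_split hz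
  have hdT₂ : d ∉ T₂ := fun h => hzD (hinter d h₁.left_mem h ▸ hd)
  have hyT₁ : y ∉ T₁ := fun h => hzD (hinter y h h₂.right_mem ▸ hy)
  obtain rfl | hvd := eq_or_ne v d
  · obtain ⟨S, hSD, E, hS, hE⟩ := hD hy hv hdy.symm
    refine ⟨T₂ ∪ S, ?_, _, h₂.append hS fun x hx hxS => ?_, hP Set.subset_union_right hE⟩
    · exact Set.union_subset (fun x hx => Or.inr (Or.inr hx)) (hSD.trans Set.subset_union_left)
    · exact (hTD x (Or.inr hx) (hSD hxS)).resolve_left (ne_of_mem_of_not_mem hx hdT₂)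
  · obtain ⟨S, hSD, E, hS, hE⟩ := hD hd hv hvd.symm
    refine ⟨T₁ ∪ S, ?_, _, h₁.symm.append hS fun x hx hxS => ?_, hP Set.subset_union_right hE⟩
    · exact Set.union_subset (fun x hx => Or.inr (Or.inl hx)) (hSD.trans Set.subset_union_left)
    · exact (hTD x (Or.inl hx) (hSD hxS)).resolve_right (ne_of_mem_of_not_mem hx hyT₁)

theorem exists_hasPath_around_ear {z z' : V} {U U' : Set V} (hP : Monotone P)
    (hD : PairwiseLinked G P D) (hd : d ∈ D) (hy : y ∈ D) (hdy : d ≠ y)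
    (hTD : ∀ x ∈ T, x ∈ D → x = d ∨ x = y) (hU : HasPath G d z U ∅) (hU' : HasPath G z' y U' ∅)
    (hUT : U ⊆ T) (hUT' : U' ⊆ T) (hUU' : Disjoint U U') :
    ∃ S ⊆ D ∪ T, ∃ E, HasPath G z z' S E ∧ P E := by
  obtain ⟨S, hSD, E, hS, hE⟩ := hD hd hy hdy
  have hyU : y ∉ U := Set.disjoint_right.1 hUU' hU'.right_mem
  have hdU' : d ∉ U' := Set.disjoint_left.1 hUU' hU.left_mem
  refine ⟨U ∪ S ∪ U', ?_, _, (hU.symm.append hS fun x hx hxS => ?_).append hU'.symm ?_,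
    hP (Set.subset_union_right.trans Set.subset_union_left) hE⟩
  · exact Set.union_subset (Set.union_subset (hUT.trans Set.subset_union_right)
      (hSD.trans Set.subset_union_left)) (hUT'.trans Set.subset_union_right)
  · exact (hTD x (hUT hx) (hSD hxS)).resolve_right (ne_of_mem_of_not_mem hx hyU)
  · rintro x (hx | hxS) hx'
    · exact absurd hx' (Set.disjoint_left.1 hUU' hx)
    · exact (hTD x (hUT' hx') (hSD hxS)).resolve_left (ne_of_mem_of_not_mem hx' hdU')

theorem union_ear (hP : Monotone P) (hD : PairwiseLinked G P D) (hd : d ∈ D) (hy : y ∈ D)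
    (hdy : d ≠ y) (hT : HasPath G d y T ∅) (hTD : ∀ x ∈ T, x ∈ D → x = d ∨ x = y) :
    PairwiseLinked G P (D ∪ T) := by
  intro u hu v hv huv
  by_cases huD : u ∈ D
  · by_cases hvD : v ∈ D
    · obtain ⟨S, hSD, hS⟩ := hD huD hvD huv
      exact ⟨S, hSD.trans Set.subset_union_left, hS⟩
    · obtain ⟨S, hST, E, hS, hE⟩ := exists_hasPath_from_ear hP hD hd hy hdy hT hTD
        (hv.resolve_left hvD) hvD huD
      exact ⟨S, hST, E, hS.symm, hE⟩
  · have huT := hu.resolve_left huD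
    by_cases hvD : v ∈ D
    · exact exists_hasPath_from_ear hP hD hd hy hdy hT hTD huT huD hvD
    · obtain ⟨U, U', hUT, hUT', hU, hU', hdisj⟩ | ⟨U, U', hUT, hUT', hU, hU', hdisj⟩ :=
        hT.exists_split_two huT (hv.resolve_left hvD) huv
      · exact exists_hasPath_around_ear hP hD hd hy hdy hTD hU hU' hUT hUT' hdisj
      · obtain ⟨S, hST, E, hS, hE⟩ :=
          exists_hasPath_around_ear hP hD hd hy hdy hTD hU hU' hUT hUT' hdisj
        exact ⟨S, hST, E, hS.symm, hE⟩

theorem univ [Finite V] (hG : G.IsTwoConnected) (hP : Monotone P) (hD : PairwiseLinked G P D)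
    (hnt : D.Nontrivial) : PairwiseLinked G P Set.univ := by
  obtain ⟨M, ⟨hDM, hM⟩, hmax⟩ :=
    (Set.toFinite {M | D ⊆ M ∧ PairwiseLinked G P M}).exists_maximal ⟨D, subset_rfl, hD⟩
  suffices hMuniv : M = Set.univ from hMuniv ▸ hM
  refine Set.eq_univ_of_forall fun w => by_contra fun hw => ?_
  obtain ⟨d, hd, y, hy, hdy, T, hT, hTD, hTM⟩ := exists_ear hG (hnt.mono hDM) hw
  exact hTM (Set.subset_union_right.trans
    (hmax ⟨hDM.trans Set.subset_union_left, hM.union_ear hP hd hy hdy hT hTD⟩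
      Set.subset_union_left))

end PairwiseLinked

theorem exists_hasPath_through [Finite V] (hG : G.IsTwoConnected) {u v : V} (huv : u ≠ v) (b : V) :
    ∃ S, HasPath G u v S ∅ ∧ b ∈ S := by
  have : Nontrivial V := ⟨u, v, huv⟩
  obtain ⟨w, hbw⟩ := hG.2.1.preconnected.exists_adj_of_nontrivial b
  let P (E : Set (Sym2 V)) : Prop := ∃ e ∈ E, b ∈ e
  have hP : Monotone P := fun E E' hEE' ⟨e, he, hbe⟩ => ⟨e, hEE' he, hbe⟩
  have hbase : PairwiseLinked G P {b, w} := by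
    have hedge := HasPath.of_adj hbw
    have hPe : P {s(b, w)} := ⟨_, rfl, Sym2.mem_mk_left b w⟩
    rintro x (rfl | rfl) y (rfl | rfl) hxy
    · exact absurd rfl hxy
    · exact ⟨_, subset_rfl, _, hedge, hPe⟩
    · exact ⟨_, subset_rfl, _, hedge.symm, hPe⟩
    · exact absurd rfl hxy
  obtain ⟨S, -, E, hS, e, he, hbe⟩ := hbase.univ hG hP (Set.nontrivial_pair hbw.ne) (Set.mem_univ u)
    (Set.mem_univ v) huv
  exact ⟨S, hS.forget_edges, hS.mem_of_mem_edge he hbe⟩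

/-! ### Colorings of cycles and wheels -/

/-- The periodic sequence `v` runs around a cycle of length `n`; cycles of length 2 (a single edge)
are not excluded. -/
structure IsCycleSeq (G : SimpleGraph V) (v : ℕ → V) (n : ℕ) : Prop where
  periodic : Function.Periodic v n
  injOn : Set.InjOn v (Set.Iio n)
  adj : ∀ i, G.Adj (v i) (v (i + 1))

theorem isCycleSeq_getVert_mod {u : V} {p : G.Walk u u} (hp : p.IsCycle) :
    IsCycleSeq G (fun i => p.getVert (i % p.length)) p.length where
  periodic i := by simp only [Nat.add_mod_right]
  injOn i hi j hj hij := by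
    simp only [Set.mem_Iio] at hi hj
    simp only [Nat.mod_eq_of_lt hi, Nat.mod_eq_of_lt hj] at hij
    exact hp.getVert_injOn' (show i ≤ p.length - 1 by omega) (show j ≤ p.length - 1 by omega) hij
  adj i := by
    have hpos : 0 < p.length := by have := hp.three_le_length; omega
    have hadj := p.adj_getVert_succ (Nat.mod_lt i hpos)
    obtain hlt | heq := (Nat.succ_le_of_lt (Nat.mod_lt i hpos)).lt_or_eq
    · rwa [← Nat.mod_add_mod, Nat.mod_eq_of_lt hlt]
    · rw [Nat.succ_eq_add_one] at heq
      rw [heq, p.getVert_length] at hadj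
      rwa [← Nat.mod_add_mod, heq, Nat.mod_self, p.getVert_zero]

namespace IsCycleSeq

variable {v : ℕ → V} {n i j a b a' b' : ℕ}

theorem eq_of_apply_eq (hv : IsCycleSeq G v n) (hij : i ≤ j) (hj : j < i + n) (h : v i = v j) :
    i = j := by
  have hn : 0 < n := by omega
  rw [← hv.periodic.map_mod_nat i, ← hv.periodic.map_mod_nat j] at h
  have hdvd := (Nat.modEq_iff_dvd' hij).1 (hv.injOn (Nat.mod_lt i hn) (Nat.mod_lt j hn) h)
  have := Nat.eq_zero_of_dvd_of_lt hdvd (by omega)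
  omega

theorem hasPath (hv : IsCycleSeq G v n) (hab : a ≤ b) (hb : b < a + n) :
    HasPath G (v a) (v b) (v '' Set.Icc a b) (stepEdge v '' Set.Ico a b) := by
  refine hasPath_image_Icc hab ?_ fun i _ _ => hv.adj i
  rintro i ⟨hai, hib⟩ j ⟨haj, hjb⟩ hij
  obtain hle | hle := le_total i j
  · exact hv.eq_of_apply_eq hle (by omega) hij
  · exact (hv.eq_of_apply_eq hle (by omega) hij.symm).symm

theorem disjoint_image_Icc (hv : IsCycleSeq G v n) (hb : b < a') (hb' : b' < a + n) :
    Disjoint (v '' Set.Icc a b) (v '' Set.Icc a' b') := by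
  rw [Set.disjoint_left]
  rintro _ ⟨i, ⟨hi, hi'⟩, rfl⟩ ⟨j, ⟨hj, hj'⟩, hij⟩
  have := hv.eq_of_apply_eq (show i ≤ j by omega) (by omega) hij.symm
  omega

theorem exists_index (hv : IsCycleSeq G v n) (hn : 0 < n) (a : ℕ) {x : V} (hx : x ∈ Set.range v) :
    ∃ i, a ≤ i ∧ i < a + n ∧ v i = x := by
  obtain ⟨r, rfl⟩ := hx
  have hr := Finset.mem_range.2 (Nat.mod_lt r hn)
  rw [← Nat.image_Ico_mod a n, Finset.mem_image] at hr
  obtain ⟨i, hi, hir⟩ := hr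
  rw [Finset.mem_Ico] at hi
  refine ⟨i, hi.1, hi.2, ?_⟩
  rw [← hv.periodic.map_mod_nat, hir, hv.periodic.map_mod_nat]

theorem stepEdge_injOn (hv : IsCycleSeq G v n) (hn : 3 ≤ n) :
    Set.InjOn (stepEdge v) (Set.Iio n) := by
  intro i hi j hj hij
  wlog hle : i ≤ j generalizing i j
  · exact (this hj hi hij.symm (le_of_not_ge hle)).symm
  obtain ⟨h, -⟩ | ⟨h, h'⟩ := Sym2.eq_iff.1 hij
  · exact hv.injOn hi hj h
  · simp only [Set.mem_Iio] at hi hj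
    obtain rfl | hlt := hle.eq_or_lt
    · rfl
    · obtain rfl := hv.eq_of_apply_eq hlt (by omega) h'
      have := hv.eq_of_apply_eq (by omega) (by omega) h
      omega

theorem exists_coloring (hv : IsCycleSeq G v n) (hn : 3 ≤ n) (χ : ℕ → ℕ) :
    ∃ c : Sym2 V → ℕ, ∀ i, c (stepEdge v i) = χ (i % n) := by
  refine ⟨fun e => χ (Function.invFunOn (stepEdge v) (Set.Iio n) e), fun i => ?_⟩
  have hper : stepEdge v i = stepEdge v (i % n) := by
    simp only [stepEdge]
    rw [hv.periodic.map_mod_nat, ← hv.periodic.map_mod_nat (i % n + 1), Nat.mod_add_mod,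
      hv.periodic.map_mod_nat]
  simp only [hper]
  rw [(hv.stepEdge_injOn hn).leftInvOn_invFunOn (Nat.mod_lt i (by omega))]

theorem exists_pairwiseLinked (hv : IsCycleSeq G v n) {k : ℕ} (hn : 3 ≤ n) (hk : 2 * k ≤ n) :
    ∃ c : Sym2 V → ℕ, PairwiseLinked G (fun E => Set.Iio k ⊆ c '' E) (Set.range v) := by
  obtain ⟨c, hc⟩ := hv.exists_coloring hn (· % k)
  have hc' : ∀ r < n, c (stepEdge v r) = r % k := fun r hr => by rw [hc, Nat.mod_eq_of_lt hr]
  have harc : ∀ s g, s < g → g < n →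
      ∃ S ⊆ Set.range v, ∃ E, HasPath G (v s) (v g) S E ∧ Set.Iio k ⊆ c '' E := by
    intro s g hsg hg
    by_cases hlong : k ≤ g - s
    · refine ⟨_, Set.image_subset_range v _, _, hv.hasPath hsg.le (by omega), fun i hi => ?_⟩
      rw [Set.mem_Iio, ← Finset.mem_range, ← Nat.image_Ico_mod s k, Finset.mem_image] at hi
      obtain ⟨r, hr, rfl⟩ := hi
      rw [Finset.mem_Ico] at hr
      exact ⟨_, ⟨r, ⟨hr.1, by omega⟩, rfl⟩, hc' r (by omega)⟩
    · have harc' := (hv.hasPath (show g ≤ s + n by omega) (by omega)).symm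
      rw [hv.periodic] at harc'
      refine ⟨_, Set.image_subset_range v _, _, harc', fun i (hi : i < k) => ?_⟩
      obtain his | hsi := lt_or_ge i s
      · exact ⟨_, ⟨i + n, ⟨by omega, by omega⟩, rfl⟩, by
          rw [hc, Nat.add_mod_right, Nat.mod_eq_of_lt (show i < n by omega), Nat.mod_eq_of_lt hi]⟩
      obtain _ | hgi := lt_or_ge i g
      · exact ⟨_, ⟨i + k, ⟨by omega, by omega⟩, rfl⟩, by
          rw [hc' _ (by omega), Nat.add_mod_right, Nat.mod_eq_of_lt hi]⟩
      · exact ⟨_, ⟨i, ⟨hgi, by omega⟩, rfl⟩, by rw [hc' _ (by omega), Nat.mod_eq_of_lt hi]⟩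
  refine ⟨c, fun x hx y hy hxy => ?_⟩
  obtain ⟨s, -, hs, rfl⟩ := hv.exists_index (by omega) 0 hx
  obtain ⟨g, -, hg, rfl⟩ := hv.exists_index (by omega) 0 hy
  rw [Nat.zero_add] at hs hg
  obtain hsg | hgs := (ne_of_apply_ne v hxy).lt_or_gt
  · exact harc s g hsg hg
  · obtain ⟨S, hS, E, hp, hE⟩ := harc g s hgs hs
    exact ⟨S, hS, E, hp.symm, hE⟩

end IsCycleSeq

theorem exists_last_mem_Ico {a b : ℕ} {Q : ℕ → Prop} (h : ∃ i, a ≤ i ∧ i < b ∧ Q i) :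
    ∃ i, a ≤ i ∧ i < b ∧ Q i ∧ ∀ j, a ≤ j → j < b → Q j → j ≤ i := by
  obtain ⟨i, ⟨⟨ha, hb⟩, hQ⟩, hmax⟩ := Set.exists_max_image {i ∈ Set.Ico a b | Q i} id
    ((Set.finite_Ico a b).sep Q) (h.imp fun i hi => ⟨⟨hi.1, hi.2.1⟩, hi.2.2⟩)
  exact ⟨i, ha, hb, hQ, fun j ha hb hQ => hmax j ⟨⟨ha, hb⟩, hQ⟩⟩

namespace IsCycleSeq

variable {v : ℕ → V} {n s g : ℕ} {z : V}

theorem exists_hasPath_hub (hv : IsCycleSeq G v n) (hz : z ∉ Set.range v)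
    (hnbr : ∃ i, s ≤ i ∧ i < s + n ∧ G.Adj z (v i)) :
    ∃ S ⊆ insert z (Set.range v), ∃ E, HasPath G z (v s) S E ∧
      ∀ i, s ≤ i → i < s + n → G.Adj z (v i) → stepEdge v i ∈ E ∨ s(z, v i) ∈ E := by
  obtain ⟨b, hsb, hbn, hzb, hmax⟩ := exists_last_mem_Ico hnbr
  refine ⟨_, ?_, _, (hv.hasPath hsb hbn).symm.cons hzb fun h => hz (Set.image_subset_range v _ h),
    fun i hsi hin hzi => ?_⟩
  · exact Set.insert_subset_insert (Set.image_subset_range v _)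
  · obtain rfl | hib := (hmax i hsi hin hzi).eq_or_lt
    · exact Or.inr (Or.inl rfl)
    · exact Or.inl (Or.inr ⟨i, ⟨hsi, hib⟩, rfl⟩)

/-- If both arcs between `v s` and `v g` contain a neighbor of `z`, shortcut through `z` at the last
neighbor of either arc: a spoke replaces the rim edge that is skipped there. -/
theorem exists_hasPath_rim (hv : IsCycleSeq G v n) (hz : z ∉ Set.range v) (hsg : s < g)
    (hgn : g < s + n) :
    ∃ S ⊆ insert z (Set.range v), ∃ E, HasPath G (v s) (v g) S E ∧
      ∀ i, s ≤ i → i < s + n → G.Adj z (v i) → stepEdge v i ∈ E ∨ s(z, v i) ∈ E := by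
  have hrim : ∀ a b, v '' Set.Icc a b ⊆ insert z (Set.range v) := fun a b =>
    (Set.image_subset_range v _).trans (Set.subset_insert z _)
  by_cases hleft : ∃ i, s ≤ i ∧ i < g ∧ G.Adj z (v i)
  swap
  · have harc := (hv.hasPath (show g ≤ s + n by omega) (by omega)).symm
    rw [hv.periodic] at harc
    push Not at hleft
    exact ⟨_, hrim _ _, _, harc, fun i hsi hin hzi =>
      Or.inl ⟨i, ⟨not_lt.1 fun hig => hleft i hsi hig hzi, hin⟩, rfl⟩⟩
  by_cases hright : ∃ i, g ≤ i ∧ i < s + n ∧ G.Adj z (v i)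
  swap
  · push Not at hright
    exact ⟨_, hrim _ _, _, hv.hasPath hsg.le hgn, fun i hsi hin hzi =>
      Or.inl ⟨i, ⟨hsi, not_le.1 fun hgi => hright i hgi hin hzi⟩, rfl⟩⟩
  obtain ⟨a, hsa, hag, hza, hamax⟩ := exists_last_mem_Ico hleft
  obtain ⟨b, hgb, hbn, hzb, hbmax⟩ := exists_last_mem_Ico hright
  have hz' : ∀ a b, z ∉ v '' Set.Icc a b := fun a b h => hz (Set.image_subset_range v _ h)
  have hpath := (hv.hasPath hsa (by omega)).append_adj hza.symm
    ((hv.hasPath hgb (by omega)).symm.cons hzb (hz' _ _))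
    (Set.disjoint_insert_right.2 ⟨hz' _ _, hv.disjoint_image_Icc hag hbn⟩)
  refine ⟨_, Set.union_subset (hrim _ _) (Set.insert_subset (Set.mem_insert z _) (hrim _ _)), _,
    hpath, fun i hsi hin hzi => ?_⟩
  obtain hig | hgi := lt_or_ge i g
  · obtain rfl | hia := (hamax i hsi hig hzi).eq_or_lt
    · exact Or.inr (Or.inl Sym2.eq_swap)
    · exact Or.inl (Or.inr (Or.inl ⟨i, ⟨hsi, hia⟩, rfl⟩))
  · obtain rfl | hib := (hbmax i hgi hin hzi).eq_or_lt
    · exact Or.inr (Or.inr (Or.inr (Or.inl rfl)))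
    · exact Or.inl (Or.inr (Or.inr (Or.inr ⟨i, ⟨hgi, hib⟩, rfl⟩)))

end IsCycleSeq

theorem exists_Iio_subset_image {s : Set V} {k : ℕ} (hk : k ≤ s.ncard) :
    ∃ f : V → ℕ, Set.Iio k ⊆ f '' s := by
  obtain rfl | hpos := k.eq_zero_or_pos
  · exact ⟨0, by simp⟩
  obtain ⟨x, -⟩ := Set.nonempty_of_ncard_ne_zero (hpos.trans_le hk).ne'
  have : Nonempty V := ⟨x⟩
  have hcard : (Set.Iio k).encard ≤ s.encard := by
    rw [← (Set.finite_of_ncard_pos (hpos.trans_le hk)).cast_ncard_eq,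
      ← (Set.finite_Iio k).cast_ncard_eq]
    simpa using hk
  obtain ⟨g, hg, hinj⟩ := (Set.finite_Iio k).exists_injOn_of_encard_le hcard
  exact ⟨Function.invFunOn g (Set.Iio k), fun i hi => ⟨g i, hg hi, hinj.leftInvOn_invFunOn hi⟩⟩

theorem exists_recoloring_star (c : Sym2 V → ℕ) (z : V) (f : V → ℕ) :
    ∃ c' : Sym2 V → ℕ, (∀ x, c' s(z, x) = f x) ∧ ∀ e, z ∉ e → c' e = c e := by
  classical
  refine ⟨fun e => if h : z ∈ e then f (Sym2.Mem.other h) else c e, fun x => ?_,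
    fun e he => dif_neg he⟩
  have hmem : z ∈ s(z, x) := Sym2.mem_mk_left z x
  simp only [dif_pos hmem, Sym2.congr_right.1 (Sym2.other_spec hmem)]

theorem IsCycleSeq.exists_pairwiseLinked_wheel {v : ℕ → V} {n k : ℕ} {z : V}
    (hv : IsCycleSeq G v n) (hn : 3 ≤ n) (hz : z ∉ Set.range v) (hk : 0 < k)
    (hdeg : k ≤ (G.neighborSet z ∩ Set.range v).ncard) :
    ∃ c : Sym2 V → ℕ,
      PairwiseLinked G (fun E => Set.Iio k ⊆ c '' E) (insert z (Set.range v)) := by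
  obtain ⟨f, hf⟩ := exists_Iio_subset_image hdeg
  obtain ⟨c₀, hc₀⟩ := hv.exists_coloring hn (f ∘ v)
  obtain ⟨c, hspoke, hc⟩ := exists_recoloring_star c₀ z f
  have hrim : ∀ i, c (stepEdge v i) = f (v i) := fun i => by
    rw [hc, hc₀, Function.comp, hv.periodic.map_mod_nat]
    rintro h
    obtain rfl | rfl := Sym2.mem_iff.1 h <;> exact hz ⟨_, rfl⟩
  have hcolors : ∀ s E, (∀ i, s ≤ i → i < s + n → G.Adj z (v i) →
      stepEdge v i ∈ E ∨ s(z, v i) ∈ E) → Set.Iio k ⊆ c '' E := by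
    intro s E hE a ha
    obtain ⟨x, ⟨hzx, hx⟩, rfl⟩ := hf ha
    obtain ⟨i, hsi, hin, rfl⟩ := hv.exists_index (by omega) s hx
    exact (hE i hsi hin hzx).elim (fun h => ⟨_, h, hrim i⟩) fun h => ⟨_, h, hspoke _⟩
  have hhub : ∀ s, ∃ S ⊆ insert z (Set.range v), ∃ E, HasPath G z (v s) S E ∧
      Set.Iio k ⊆ c '' E := by
    intro s
    obtain ⟨x, hzx, hx⟩ := Set.nonempty_of_ncard_ne_zero (hk.trans_le hdeg).ne'
    obtain ⟨i, hsi, hin, rfl⟩ := hv.exists_index (by omega) s hx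
    obtain ⟨S, hS, E, hp, hE⟩ := hv.exists_hasPath_hub hz ⟨i, hsi, hin, hzx⟩
    exact ⟨S, hS, E, hp, hcolors s E hE⟩
  refine ⟨c, ?_⟩
  rintro x (rfl | hx) y (rfl | hy) hxy
  · exact absurd rfl hxy
  · obtain ⟨g, rfl⟩ := hy
    exact hhub g
  · obtain ⟨s, rfl⟩ := hx
    obtain ⟨S, hS, E, hp, hE⟩ := hhub s
    exact ⟨S, hS, E, hp.symm, hE⟩
  · obtain ⟨s, rfl⟩ := hx
    obtain ⟨g, hsg, hgn, rfl⟩ := hv.exists_index (by omega) s hy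
    obtain ⟨S, hS, E, hp, hE⟩ := hv.exists_hasPath_rim hz
      (hsg.lt_of_ne (ne_of_apply_ne v hxy)) hgn
    exact ⟨S, hS, E, hp, hcolors s E hE⟩

/-! ### The circumference of a 2-connected graph -/

/-- Some path with vertex set `S` has adjacent ends: `S` is the vertex set of a cycle, or consists
of the two ends of an edge. In this form cycles can be assembled by gluing paths. -/
def HasClosedPath (G : SimpleGraph V) (S : Set V) : Prop :=
  ∃ u w, HasPath G u w S ∅ ∧ G.Adj w u

namespace HasClosedPath

variable {S : Set V}

theorem exists_isCycle (h : HasClosedPath G S) (hS : 3 ≤ S.ncard) :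
    ∃ (u : V) (p : G.Walk u u), p.IsCycle ∧ p.length = S.ncard := by
  obtain ⟨u, w, h, hwu⟩ := h
  obtain ⟨p, hp, hcard⟩ := h.exists_isPath_length
  refine ⟨w, Walk.cons hwu p, (Walk.cons_isCycle_iff p hwu).2 ⟨hp, fun hmem => ?_⟩, by simp [hcard]⟩
  have hlen := hp.length_eq_one_of_mem_edges (Sym2.eq_swap ▸ hmem)
  omega

theorem of_hasPath {c y : V} {R : Set V} {E E' : Set (Sym2 V)} (hS : HasPath G c y S E)
    (hR : HasPath G c y R E') (hcy : c ≠ y) (hSR : ∀ x ∈ S, x ∈ R → x = c ∨ x = y) :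
    HasClosedPath G (S ∪ R) := by
  obtain ⟨w, hcw, -, hw⟩ := hR.exists_adj_start hcy
  have hclosed := hS.append hw.symm fun x hx hxR => (hSR x hx hxR.1).resolve_left hxR.2
  rw [show S ∪ R \ {c} = S ∪ R from sup_sdiff_eq_sup (Set.singleton_subset_iff.2 hS.left_mem)]
    at hclosed
  exact ⟨c, w, hclosed.forget_edges, hcw.symm⟩

theorem exists_hasPath_of_mem (h : HasClosedPath G S) {d : V} (hd : d ∈ S) :
    ∃ w, HasPath G d w S ∅ := by
  obtain ⟨u, w, h, hwu⟩ := h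
  obtain ⟨S₁, S₂, h₁, h₂, rfl, hinter⟩ := h.exists_split hd
  obtain rfl | hdw := eq_or_ne d w
  · exact ⟨u, h.symm⟩
  obtain ⟨t, -, -, ht⟩ := h₂.exists_adj_start hdw
  have hrot := h₁.symm.append_adj hwu.symm ht.symm
    (Set.disjoint_left.2 fun x hx hx' => hx'.2 (hinter x hx hx'.1))
  rw [show S₁ ∪ S₂ \ {d} = S₁ ∪ S₂ from
    sup_sdiff_eq_sup (Set.singleton_subset_iff.2 h₁.right_mem)] at hrot
  exact ⟨t, hrot.forget_edges⟩

theorem eq_univ [Finite V] (hG : G.Connected) (h : HasClosedPath G S)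
    (hmax : ∀ u w T, HasPath G u w T ∅ → T.ncard ≤ S.ncard) : S = Set.univ := by
  refine Set.eq_univ_of_forall fun w => by_contra fun hw => ?_
  have hne : S.Nonempty := let ⟨u, _, hu, _⟩ := h; ⟨u, hu.left_mem⟩
  obtain ⟨d, hd, x, hx, hdx⟩ := exists_adj_notMem hG hne hw
  obtain ⟨t, ht⟩ := h.exists_hasPath_of_mem hd
  have hlong := hmax _ _ _ (ht.cons hdx.symm hx).forget_edges
  rw [Set.ncard_insert_of_notMem hx] at hlong
  omega

end HasClosedPath

theorem HasPath.neighborSet_subset_of_forall_ncard_le [Finite V] {u w : V} {S : Set V}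
    {E : Set (Sym2 V)} (h : HasPath G u w S E)
    (hmax : ∀ u w T, HasPath G u w T ∅ → T.ncard ≤ S.ncard) : G.neighborSet u ⊆ S := by
  intro x (hux : G.Adj u x)
  by_contra hx
  have hlong := hmax _ _ _ (h.cons hux.symm hx).forget_edges
  rw [Set.ncard_insert_of_notMem hx] at hlong
  omega

theorem exists_longest_isPathSeq (G : SimpleGraph V) [Finite V] [Nonempty V] :
    ∃ (v : ℕ → V) (l : ℕ), IsPathSeq G v l ∧ ∀ u w T, HasPath G u w T ∅ → T.ncard ≤ l + 1 := by
  obtain ⟨u, w, p, hp, hmax⟩ := Walk.exists_isPath_forall_isPath_length_le_length G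
  refine ⟨p.getVert, p.length, isPathSeq_getVert hp, fun u w T hT => ?_⟩
  obtain ⟨q, hq, hcard⟩ := hT.exists_isPath_length
  exact hcard ▸ Nat.succ_le_succ (hmax _ _ q hq)

/-- Take `i < j` as close as possible. Then no element of `A` or `B` lies strictly between them,
and if `j ≠ i + 1`, the predecessors of the elements of `A.erase j` avoid `insert l B`. -/
theorem exists_crossing_gap {A B : Finset ℕ} {l : ℕ} (hA : ∀ j ∈ A, 0 < j ∧ j ≤ l)
    (hB : ∀ i ∈ B, i < l) (hex : ∃ i ∈ B, ∃ j ∈ A, i < j) :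
    ∃ i ∈ B, ∃ j ∈ A, i < j ∧
      (j = i + 1 ∨ A.card + B.card ≤ (Finset.Icc 0 i ∪ Finset.Icc j l).card) := by
  obtain ⟨⟨i, j⟩, hij, hmin⟩ := Finset.exists_min_image {x ∈ B ×ˢ A | x.1 < x.2}
    (fun x => x.2 - x.1) (by
      obtain ⟨i, hi, j, hj, hlt⟩ := hex
      exact ⟨(i, j), by simp [hi, hj, hlt]⟩)
  simp only [Finset.mem_filter, Finset.mem_product, and_imp, Prod.forall] at hij hmin
  obtain ⟨⟨hi, hj⟩, hlt⟩ := hij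
  refine ⟨i, hi, j, hj, hlt, or_iff_not_imp_left.2 fun hne => ?_⟩
  have hpred : Set.InjOn (· - 1) (A.erase j : Set ℕ) := fun a ha b hb (hab : a - 1 = b - 1) => by
    have := hA a (Finset.mem_of_mem_erase ha)
    have := hA b (Finset.mem_of_mem_erase hb)
    omega
  have hdisj : Disjoint ((A.erase j).image (· - 1)) (insert l B) := by
    simp only [Finset.disjoint_left, Finset.mem_image, Finset.mem_insert, Finset.mem_erase]
    rintro _ ⟨r, ⟨-, hr⟩, rfl⟩ (hl | hrB)
    · have := hA r hr
      omega
    · have := hA r hr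
      have := hmin _ r hrB hr (by omega)
      omega
  have hsub : (A.erase j).image (· - 1) ∪ insert l B ⊆ Finset.Icc 0 i ∪ Finset.Icc j l := by
    intro r hr
    simp only [Finset.mem_union, Finset.mem_image, Finset.mem_insert, Finset.mem_erase,
      Finset.mem_Icc] at hr ⊢
    obtain ⟨r, ⟨hrj, hr⟩, rfl⟩ | rfl | hr := hr
    · have := hA r hr
      have := hmin i r hi hr
      omega
    · have := hA j hj
      omega
    · have := hB r hr
      have := hmin r j hr hj
      omega
  have hcard := Finset.card_le_card hsub
  rw [Finset.card_union_of_disjoint hdisj, Finset.card_image_of_injOn hpred,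
    Finset.card_insert_of_notMem fun h => (hB l h).false, Finset.card_erase_of_mem hj] at hcard
  have := Finset.card_pos.2 ⟨j, hj⟩
  omega

theorem image_tsub_Icc (v : ℕ → V) {l q : ℕ} (hq : q ≤ l) :
    (fun i => v (l - i)) '' Set.Icc 0 (l - q) = v '' Set.Icc q l := by
  ext x
  constructor
  · rintro ⟨r, ⟨-, hr⟩, rfl⟩
    exact ⟨l - r, ⟨by omega, by omega⟩, rfl⟩
  · rintro ⟨r, ⟨hr, hr'⟩, rfl⟩
    exact ⟨l - r, ⟨by omega, by omega⟩, by simp only [Nat.sub_sub_self hr']⟩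

namespace IsPathSeq

variable {v : ℕ → V} {l i j p q : ℕ} {x : V}

theorem hasClosedPath_of_crossing (hv : IsPathSeq G v l) (hij : i < j) (hj : j ≤ l)
    (hli : G.Adj (v l) (v i)) (h0j : G.Adj (v 0) (v j)) :
    HasClosedPath G (v '' (Set.Icc 0 i ∪ Set.Icc j l)) := by
  have hpath := (hv.hasPath i.zero_le (hij.le.trans hj)).append_adj hli.symm
    (hv.hasPath hj le_rfl).symm (hv.disjoint_image_Icc hij le_rfl)
  rw [← Set.image_union] at hpath
  exact ⟨v 0, v j, hpath.forget_edges, h0j.symm⟩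

theorem exists_hasPath_sweep_left (hv : IsPathSeq G v l) (hp : p ≤ l) (h0p : G.Adj (v 0) (v p))
    (hN : G.neighborSet (v 0) ⊆ v '' Set.Icc 0 p) (hx : x ∈ v '' Set.Icc 0 p) (hxp : x ≠ v p) :
    ∃ S ⊆ v '' Set.Icc 0 p, HasPath G x (v p) S ∅ ∧ insert (v 0) (G.neighborSet (v 0)) ⊆ S := by
  classical
  obtain ⟨a, ⟨-, hap⟩, rfl⟩ := hx
  have hap : a < p := hap.lt_of_ne (ne_of_apply_ne v hxp)
  have hex : ∃ j, a < j ∧ G.Adj (v 0) (v j) := ⟨p, hap, h0p⟩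
  obtain ⟨haj, h0j⟩ := Nat.find_spec hex
  have hmin : ∀ r, a < r → G.Adj (v 0) (v r) → Nat.find hex ≤ r := fun r hr h =>
    Nat.find_min' hex ⟨hr, h⟩
  generalize Nat.find hex = j at haj h0j hmin
  have hjp := hmin p hap h0p
  have hpath := (hv.hasPath a.zero_le (by omega)).symm.append_adj h0j (hv.hasPath hjp hp)
    (hv.disjoint_image_Icc haj hp)
  refine ⟨_, ?_, hpath.forget_edges, Set.insert_subset (Or.inl ⟨0, by simp, rfl⟩) fun y hy => ?_⟩
  · exact Set.union_subset (Set.image_mono (Set.Icc_subset_Icc_right hap.le))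
      (Set.image_mono (Set.Icc_subset_Icc_left j.zero_le))
  · obtain ⟨r, ⟨hr, hrp⟩, rfl⟩ := hN hy
    obtain hra | har := le_or_gt r a
    · exact Or.inl ⟨r, ⟨hr, hra⟩, rfl⟩
    · exact Or.inr ⟨r, ⟨hmin r har hy, hrp⟩, rfl⟩

theorem exists_hasPath_sweep_right (hv : IsPathSeq G v l) (hq : q ≤ l) (hlq : G.Adj (v l) (v q))
    (hN : G.neighborSet (v l) ⊆ v '' Set.Icc q l) (hx : x ∈ v '' Set.Icc q l) (hxq : x ≠ v q) :
    ∃ S ⊆ v '' Set.Icc q l, HasPath G x (v q) S ∅ ∧ insert (v l) (G.neighborSet (v l)) ⊆ S := by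
  have hsweep := hv.reverse.exists_hasPath_sweep_left (p := l - q) (x := x) (Nat.sub_le l q)
  simp only [image_tsub_Icc v hq, Nat.sub_zero, Nat.sub_sub_self hq] at hsweep
  exact hsweep hlq hN hx hxq

end IsPathSeq

/-- A path with vertex set `T` from `c ∈ A` to `d ∈ B` that meets `A` only in `c` and `B` only in
`d`. -/
structure IsLink (G : SimpleGraph V) (A B : Set V) (c d : V) (T : Set V) : Prop where
  hasPath : HasPath G c d T ∅
  left_mem : c ∈ A
  right_mem : d ∈ B
  eq_left : ∀ x ∈ T, x ∈ A → x = c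
  eq_right : ∀ x ∈ T, x ∈ B → x = d

namespace IsLink

variable {A B : Set V} {a b c d c' d' y y' : V} {Q T T' S S' : Set V}

theorem symm (h : IsLink G A B c d T) : IsLink G B A d c T :=
  ⟨h.hasPath.symm, h.right_mem, h.left_mem, h.eq_right, h.eq_left⟩

theorem notMem (h : IsLink G A B c d T) (hb : b ∈ B) (hbA : b ∉ A) (hN : G.neighborSet b ⊆ B) :
    b ∉ T := by
  intro hbT
  obtain rfl := h.eq_right b hbT hb
  obtain ⟨w, hbw, hwT, -⟩ :=
    h.hasPath.symm.exists_adj_start fun hbc => hbA (hbc ▸ h.left_mem)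
  exact hbw.ne (h.eq_right w hwT (hN hbw)).symm

theorem reroute_of_mem {Q₁ Q₂ : Set V} (hT : IsLink G A B c d T) (hQ : IsLink G A B a b (Q₁ ∪ Q₂))
    (hQ₁ : HasPath G a y Q₁ ∅) (hQ₂ : HasPath G y b Q₂ ∅) (hinter : ∀ x ∈ Q₁, x ∈ Q₂ → x = y)
    (hfirst : ∀ x ∈ Q₁, x ∈ T ∪ T' → x = y) (hy : y ∈ T) (hTT' : Disjoint T T') :
    ∃ R, IsLink G A B a d R ∧ Disjoint R T' := by
  obtain ⟨T₁, T₂, h₁, h₂, rfl, hsplit⟩ := hT.hasPath.exists_split hy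
  have hpath := hQ₁.append h₂ fun x hx hxT => hfirst x hx (Or.inl (Or.inr hxT))
  refine ⟨Q₁ ∪ T₂, ⟨hpath.forget_edges, hQ.left_mem, hT.right_mem, ?_, ?_⟩, ?_⟩
  · rintro x (hx | hx) hxA
    · exact hQ.eq_left x (Or.inl hx) hxA
    · obtain rfl := hT.eq_left x (Or.inr hx) hxA
      obtain rfl := hsplit x h₁.left_mem hx
      exact hQ.eq_left x (Or.inr hQ₂.left_mem) hxA
  · rintro x (hx | hx) hxB
    · obtain rfl := hQ.eq_right x (Or.inl hx) hxB
      obtain rfl := hinter x hx hQ₂.right_mem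
      exact hT.eq_right x hy hxB
    · exact hT.eq_right x (Or.inr hx) hxB
  · refine Set.disjoint_left.2 ?_
    rintro x (hx | hx) hxT'
    · obtain rfl := hfirst x hx (Or.inr hxT')
      exact Set.disjoint_left.1 hTT' hy hxT'
    · exact Set.disjoint_left.1 hTT' (Or.inr hx) hxT'

/-- Follow `Q` up to its first vertex on `T` or `T'` and continue there. -/
theorem reroute (hQ : IsLink G A B a b Q) (hT : IsLink G A B c d T) (hT' : IsLink G A B c' d' T')
    (hTT' : Disjoint T T') :
    ∃ d₁ c₂ d₂ R R', IsLink G A B a d₁ R ∧ IsLink G A B c₂ d₂ R' ∧ Disjoint R R' ∧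
      (d₁ = d ∧ d₂ = d' ∨ d₁ = d' ∧ d₂ = d ∨ d₁ = b ∧ d₂ = d') := by
  by_cases hmeet : (Q ∩ (T ∪ T')).Nonempty
  · obtain ⟨y, hy, Q₁, Q₂, hQ₁, hQ₂, rfl, hinter, hfirst⟩ := hQ.hasPath.exists_first_mem hmeet
    rcases hy with hy | hy
    · obtain ⟨R, hR, hRT'⟩ := hT.reroute_of_mem hQ hQ₁ hQ₂ hinter hfirst hy hTT'
      exact ⟨d, c', d', R, T', hR, hT', hRT', Or.inl ⟨rfl, rfl⟩⟩
    · obtain ⟨R, hR, hRT⟩ := hT'.reroute_of_mem hQ hQ₁ hQ₂ hinter (Set.union_comm T T' ▸ hfirst) hy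
        hTT'.symm
      exact ⟨d', c, d, R, T, hR, hT, hRT, Or.inr (Or.inl ⟨rfl, rfl⟩)⟩
  · refine ⟨b, c', d', Q, T', hQ, hT', ?_, Or.inr (Or.inr ⟨rfl, rfl⟩)⟩
    exact Set.disjoint_left.2 fun x hx hxT' => hmeet ⟨x, hx, Or.inr hxT'⟩

theorem exists_disjoint_through_ends (hQ : IsLink G A B a b Q) (hT : IsLink G A B c d T)
    (hT' : IsLink G A B c' d' T') (hTT' : Disjoint T T') :
    ∃ x y y' R R', IsLink G A B x y R ∧ IsLink G A B a y' R' ∧ Disjoint R R' ∧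
      (b = y ∨ b = y') := by
  obtain ⟨d₁, c₂, d₂, R, R', hR, hR', hRR', -⟩ := hQ.reroute hT hT' hTT'
  obtain ⟨a₁, b₂, a₂, U, U', hU, hU', hUU', ⟨rfl, rfl⟩ | ⟨rfl, rfl⟩ | ⟨rfl, rfl⟩⟩ :=
    hQ.symm.reroute hR.symm hR'.symm hRR'
  · exact ⟨_, _, _, _, _, hU'.symm, hU.symm, hUU'.symm, Or.inr rfl⟩
  · exact ⟨_, _, _, _, _, hU.symm, hU'.symm, hUU', Or.inl rfl⟩
  · exact ⟨_, _, _, _, _, hU'.symm, hU.symm, hUU'.symm, Or.inr rfl⟩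

theorem hasClosedPath (hT : IsLink G A B c d T) (hT' : IsLink G A B c' d' T')
    (hTT' : Disjoint T T') (hS : HasPath G c c' S ∅) (hSA : S ⊆ A) (hS' : HasPath G d d' S' ∅)
    (hSB : S' ⊆ B) (hAB : ∀ x ∈ A, x ∈ B → x = c') : HasClosedPath G (S ∪ T' ∪ S' ∪ T) := by
  have hcd : c ≠ d := by
    rintro rfl
    obtain rfl := hAB c hT.left_mem hT.right_mem
    exact Set.disjoint_left.1 hTT' hT.hasPath.left_mem hT'.hasPath.left_mem
  have hpath := (hS.append hT'.hasPath fun x hx hxT' => hT'.eq_left x hxT' (hSA hx)).append hS'.symm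
    (by
      rintro x (hx | hx) hxS'
      · obtain rfl := hAB x (hSA hx) (hSB hxS')
        exact hT'.eq_right x hT'.hasPath.left_mem (hSB hxS')
      · exact hT'.eq_right x hx (hSB hxS'))
  refine .of_hasPath hpath hT.hasPath hcd ?_
  rintro x ((hx | hx) | hx) hxT
  · exact Or.inl (hT.eq_left x hxT (hSA hx))
  · exact absurd hx (Set.disjoint_left.1 hTT' hxT)
  · exact Or.inr (hT.eq_right x hxT (hSB hx))

end IsLink

theorem HasPath.exists_isLink {A B S : Set V} {E : Set (Sym2 V)} {a b : V} (h : HasPath G a b S E)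
    (ha : a ∈ A) (hb : b ∈ B) : ∃ c d, ∃ T ⊆ S, IsLink G A B c d T := by
  obtain ⟨d, hd, S₁, S₂, h₁, -, rfl, -, hS₁⟩ := h.exists_first_mem ⟨b, h.right_mem, hb⟩
  obtain ⟨c, hc, T, T', hT, -, rfl, -, hTA⟩ := h₁.symm.exists_first_mem ⟨a, h₁.left_mem, ha⟩
  exact ⟨c, d, T, fun x hx => Or.inl (Or.inl hx), hT.symm, hc, hd, hTA,
    fun x hx => hS₁ x (Or.inl hx)⟩

theorem exists_disjoint_isLink [Finite V] (hG : G.IsTwoConnected) {A B : Set V} {b : V}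
    (hA : A.Nontrivial) (hb : b ∈ B) (hbA : b ∉ A) (hN : G.neighborSet b ⊆ B) :
    ∃ c d T c' d' T', IsLink G A B c d T ∧ IsLink G A B c' d' T' ∧ Disjoint T T' := by
  obtain ⟨a, ha, a', ha', hne⟩ := hA
  obtain ⟨S, hS, hbS⟩ := exists_hasPath_through hG hne b
  obtain ⟨S₁, S₂, h₁, h₂, rfl, hinter⟩ := hS.exists_split hbS
  obtain ⟨c, d, T, hTS, hT⟩ := h₁.exists_isLink ha hb
  obtain ⟨c', d', T', hTS', hT'⟩ := h₂.symm.exists_isLink ha' hb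
  refine ⟨c, d, T, c', d', T', hT, hT', Set.disjoint_left.2 fun x hx hx' => ?_⟩
  obtain rfl := hinter x (hTS hx) (hTS' hx')
  exact hT.notMem hb hbA hN hx

theorem IsPathSeq.isLink {v : ℕ → V} {l p q : ℕ} (hv : IsPathSeq G v l) (hpq : p ≤ q)
    (hq : q ≤ l) :
    IsLink G (v '' Set.Icc 0 p) (v '' Set.Icc q l) (v p) (v q) (v '' Set.Icc p q) where
  hasPath := hv.hasPath hpq hq
  left_mem := ⟨p, by simp, rfl⟩
  right_mem := ⟨q, by simp [hq], rfl⟩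
  eq_left := by
    rintro _ ⟨r, ⟨hpr, hrq⟩, rfl⟩ ⟨s, ⟨-, hsp⟩, hs⟩
    have := hv.injOn (show s ≤ l by omega) (hrq.trans hq) hs
    rw [show r = p by omega]
  eq_right := by
    rintro _ ⟨r, ⟨-, hrq⟩, rfl⟩ ⟨s, ⟨hqs, hsl⟩, hs⟩
    have := hv.injOn hsl (hrq.trans hq) hs
    rw [show r = q by omega]

theorem ncard_le_card_filter {v : ℕ → V} {l : ℕ} {N : Set V} [DecidablePred fun i => v i ∈ N]
    (hN : N ⊆ v '' Set.Icc 0 l) : N.ncard ≤ ({i ∈ Finset.Iic l | v i ∈ N} : Finset ℕ).card := by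
  rw [← Set.ncard_coe_finset]
  refine (Set.ncard_le_ncard (fun y hy => ?_) (Set.toFinite _)).trans (Set.ncard_image_le (f := v))
  obtain ⟨r, hr, rfl⟩ := hN hy
  exact ⟨r, by simpa using ⟨hr.2, hy⟩, rfl⟩

theorem exists_subset_image_Icc_left {v : ℕ → V} {l : ℕ} {N : Set V} (hN : N ⊆ v '' Set.Icc 0 l)
    (hne : N.Nonempty) : ∃ p ≤ l, v p ∈ N ∧ N ⊆ v '' Set.Icc 0 p := by
  have hex : ∃ i, 0 ≤ i ∧ i < l + 1 ∧ v i ∈ N := by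
    obtain ⟨_, hx⟩ := hne
    obtain ⟨i, hi, rfl⟩ := hN hx
    exact ⟨i, hi.1, Nat.lt_succ_of_le hi.2, hx⟩
  obtain ⟨p, -, hpl, hpN, hmax⟩ := exists_last_mem_Ico hex
  refine ⟨p, Nat.le_of_lt_succ hpl, hpN, fun x hx => ?_⟩
  obtain ⟨i, hi, rfl⟩ := hN hx
  exact ⟨i, ⟨hi.1, hmax i hi.1 (Nat.lt_succ_of_le hi.2) hx⟩, rfl⟩

theorem exists_subset_image_Icc_right {v : ℕ → V} {l : ℕ} {N : Set V} (hN : N ⊆ v '' Set.Icc 0 l)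
    (hne : N.Nonempty) : ∃ q ≤ l, v q ∈ N ∧ N ⊆ v '' Set.Icc q l := by
  rw [← image_tsub_Icc v l.zero_le, Nat.sub_zero] at hN
  obtain ⟨p, hpl, hp, hNp⟩ := exists_subset_image_Icc_left hN hne
  refine ⟨l - p, Nat.sub_le l p, hp, ?_⟩
  rwa [← image_tsub_Icc v (Nat.sub_le l p), Nat.sub_sub_self hpl]

namespace IsPathSeq

variable {v : ℕ → V} {l p q : ℕ}

theorem ncard_image (hv : IsPathSeq G v l) {I : Set ℕ} (hI : I ⊆ Set.Iic l) :
    (v '' I).ncard = I.ncard :=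
  (hv.injOn.mono hI).ncard_image

theorem ncard_image_Icc (hv : IsPathSeq G v l) : (v '' Set.Icc 0 l).ncard = l + 1 := by
  rw [hv.ncard_image fun _ hr => hr.2]
  simp [Set.ncard_eq_toFinset_card']

theorem exists_hasClosedPath_of_crossing [Finite V] (hv : IsPathSeq G v l) (hG : G.Connected)
    (hmax : ∀ u w T, HasPath G u w T ∅ → T.ncard ≤ l + 1)
    (h0 : G.neighborSet (v 0) ⊆ v '' Set.Icc 0 l) (hl : G.neighborSet (v l) ⊆ v '' Set.Icc 0 l)
    (hex : ∃ i j, i < j ∧ j ≤ l ∧ G.Adj (v l) (v i) ∧ G.Adj (v 0) (v j)) :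
    ∃ S, HasClosedPath G S ∧
      min (Nat.card V) ((G.neighborSet (v 0)).ncard + (G.neighborSet (v l)).ncard) ≤ S.ncard := by
  classical
  let I (x : V) : Finset ℕ := {i ∈ Finset.Iic l | v i ∈ G.neighborSet x}
  have hI : ∀ x r, r ∈ I x ↔ r ≤ l ∧ G.Adj x (v r) := by simp [I]
  obtain ⟨i, hi, j, hj, hij, hgap⟩ := exists_crossing_gap (A := I (v 0)) (B := I (v l)) (l := l)
    (fun j hj => ⟨Nat.pos_of_ne_zero fun h => ((hI _ _).1 hj).2.ne (h ▸ rfl), ((hI _ _).1 hj).1⟩)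
    (fun i hi => ((hI _ _).1 hi).1.lt_of_ne fun h => ((hI _ _).1 hi).2.ne (h ▸ rfl))
    (by
      obtain ⟨i, j, hij, hj, hli, h0j⟩ := hex
      exact ⟨i, (hI _ _).2 ⟨hij.le.trans hj, hli⟩, j, (hI _ _).2 ⟨hj, h0j⟩, hij⟩)
  obtain ⟨hil, hli⟩ := (hI _ _).1 hi
  obtain ⟨hjl, h0j⟩ := (hI _ _).1 hj
  have hclosed := hv.hasClosedPath_of_crossing hij hjl hli h0j
  refine ⟨_, hclosed, ?_⟩
  obtain rfl | hgap := hgap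
  · rw [show Set.Icc 0 i ∪ Set.Icc (i + 1) l = Set.Icc 0 l by ext; simp; omega] at hclosed ⊢
    rw [hclosed.eq_univ hG (hv.ncard_image_Icc ▸ hmax), Set.ncard_univ]
    exact min_le_left _ _
  · have hcard : (Set.Icc 0 i ∪ Set.Icc j l).ncard = (Finset.Icc 0 i ∪ Finset.Icc j l).card := by
      rw [← Set.ncard_coe_finset, Finset.coe_union, Finset.coe_Icc, Finset.coe_Icc]
    rw [hv.ncard_image (Set.union_subset (fun r hr => hr.2.trans hil) fun r hr => hr.2), hcard]
    exact (min_le_right _ _).trans ((Nat.add_le_add (ncard_le_card_filter h0)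
      (ncard_le_card_filter hl)).trans hgap)

theorem exists_disjoint_isLink_through_ends [Finite V] (hv : IsPathSeq G v l)
    (hG : G.IsTwoConnected) (hp : 0 < p) (hpq : p ≤ q) (hql : q < l)
    (hl : G.neighborSet (v l) ⊆ v '' Set.Icc q l) :
    ∃ c y y' R R', IsLink G (v '' Set.Icc 0 p) (v '' Set.Icc q l) c y R ∧
      IsLink G (v '' Set.Icc 0 p) (v '' Set.Icc q l) (v p) y' R' ∧ Disjoint R R' ∧
      (v q = y ∨ v q = y') := by
  have hlA : v l ∉ v '' Set.Icc 0 p := by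
    rintro ⟨r, ⟨-, hr⟩, hrl⟩
    have := hv.injOn (show r ≤ l by omega) (show l ≤ l from le_rfl) hrl
    omega
  have hA : (v '' Set.Icc 0 p).Nontrivial := by
    refine ⟨v 0, ⟨0, by simp, rfl⟩, v p, ⟨p, by simp, rfl⟩, fun h => ?_⟩
    have := hv.injOn (show 0 ≤ l by omega) (show p ≤ l by omega) h
    omega
  have hlB : v l ∈ v '' Set.Icc q l := ⟨l, by simp [hql.le], rfl⟩
  obtain ⟨_, _, _, _, _, _, hT, hT', hTT'⟩ := exists_disjoint_isLink hG hA hlB hlA hl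
  exact (hv.isLink hpq hql.le).exists_disjoint_through_ends hT hT' hTT'

theorem exists_hasClosedPath_of_not_crossing [Finite V] (hv : IsPathSeq G v l)
    (hG : G.IsTwoConnected) (hpq : p ≤ q) (hql : q ≤ l) (h0p : G.Adj (v 0) (v p))
    (hlq : G.Adj (v l) (v q)) (h0 : G.neighborSet (v 0) ⊆ v '' Set.Icc 0 p)
    (hl : G.neighborSet (v l) ⊆ v '' Set.Icc q l) :
    ∃ S, HasClosedPath G S ∧
      (G.neighborSet (v 0)).ncard + (G.neighborSet (v l)).ncard + 1 ≤ S.ncard := by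
  obtain ⟨c, y, y', R, R', hR, hR', hRR', hqy⟩ := hv.exists_disjoint_isLink_through_ends hG
    (Nat.pos_of_ne_zero fun h => h0p.ne (h ▸ rfl)) hpq (hql.lt_of_ne fun h => hlq.ne (h ▸ rfl)) hl
  have hcp : c ≠ v p := hRR'.ne_of_mem hR.hasPath.left_mem hR'.hasPath.left_mem
  have hyy' : y ≠ y' := hRR'.ne_of_mem hR.hasPath.right_mem hR'.hasPath.right_mem
  obtain ⟨S, hSA, hS, h0S⟩ := hv.exists_hasPath_sweep_left (hpq.trans hql) h0p h0 hR.left_mem hcp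
  obtain ⟨S', hSB, hS', hlS'⟩ : ∃ S' ⊆ v '' Set.Icc q l, HasPath G y y' S' ∅ ∧
      insert (v l) (G.neighborSet (v l)) ⊆ S' := by
    obtain rfl | rfl := hqy
    · obtain ⟨S', hSB, hS', hlS'⟩ :=
        hv.exists_hasPath_sweep_right hql hlq hl hR'.right_mem hyy'.symm
      exact ⟨S', hSB, hS'.symm, hlS'⟩
    · exact hv.exists_hasPath_sweep_right hql hlq hl hR.right_mem hyy'
  have hinter : ∀ x ∈ v '' Set.Icc 0 p, x ∈ v '' Set.Icc q l → x = v p := by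
    rintro _ ⟨r, ⟨-, hr⟩, rfl⟩ ⟨s, ⟨hs, hsl⟩, hsr⟩
    have := hv.injOn hsl (show r ≤ l by omega) hsr
    rw [show r = p by omega]
  refine ⟨_, hR.hasClosedPath hR' hRR' hS hSA hS' hSB hinter, ?_⟩
  have hunion := Set.ncard_union_add_ncard_inter S S'
  have hone : (S ∩ S').ncard ≤ 1 := (Set.ncard_le_ncard fun x hx =>
    hinter x (hSA hx.1) (hSB hx.2)).trans_eq (Set.ncard_singleton (v p))
  have hSle := Set.ncard_le_ncard h0S
  have hSle' := Set.ncard_le_ncard hlS'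
  rw [Set.ncard_insert_of_notMem (G.notMem_neighborSet_self)] at hSle hSle'
  have htotal : (S ∪ S').ncard ≤ (S ∪ R' ∪ S' ∪ R).ncard := Set.ncard_le_ncard <|
    Set.union_subset (fun x hx => Or.inl (Or.inl (Or.inl hx))) fun x hx => Or.inl (Or.inr hx)
  omega

end IsPathSeq

theorem exists_hasClosedPath [Finite V] (hG : G.IsTwoConnected) {d : ℕ}
    (hδ : ∀ v, d ≤ (G.neighborSet v).ncard) :
    ∃ S, HasClosedPath G S ∧ min (Nat.card V) (2 * d) ≤ S.ncard := by
  have hcard := hG.1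
  have : Nontrivial V := Finite.one_lt_card_iff_nontrivial.1 (by omega)
  obtain ⟨v, l, hv, hmax⟩ := exists_longest_isPathSeq G
  have hpath := hv.hasPath l.zero_le le_rfl
  have h0 := hpath.neighborSet_subset_of_forall_ncard_le (hv.ncard_image_Icc ▸ hmax)
  have hl := hpath.symm.neighborSet_subset_of_forall_ncard_le (hv.ncard_image_Icc ▸ hmax)
  have hδ0 := hδ (v 0)
  have hδl := hδ (v l)
  by_cases hex : ∃ i j, i < j ∧ j ≤ l ∧ G.Adj (v l) (v i) ∧ G.Adj (v 0) (v j)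
  · obtain ⟨S, hS, hcard⟩ := hv.exists_hasClosedPath_of_crossing hG.2.1 hmax h0 hl hex
    exact ⟨S, hS, (min_le_min_left _ (by omega)).trans hcard⟩
  · push Not at hex
    obtain ⟨p, hpl, h0p, hp⟩ :=
      exists_subset_image_Icc_left h0 (hG.2.1.preconnected.exists_adj_of_nontrivial (v 0))
    obtain ⟨q, hql, hlq, hq⟩ :=
      exists_subset_image_Icc_right hl (hG.2.1.preconnected.exists_adj_of_nontrivial (v l))
    have hpq : p ≤ q := le_of_not_gt fun h => hex q p h hpl hlq h0p
    obtain ⟨S, hS, hcard⟩ := hv.exists_hasClosedPath_of_not_crossing hG hpq hql h0p hlq hp hq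
    exact ⟨S, hS, (min_le_right _ _).trans (by omega)⟩

theorem exists_isCycle_min_card_le_length [Finite V] (hG : G.IsTwoConnected) {d : ℕ} (hd : 2 ≤ d)
    (hδ : ∀ v, d ≤ (G.neighborSet v).ncard) :
    ∃ (u : V) (p : G.Walk u u), p.IsCycle ∧ min (Nat.card V) (2 * d) ≤ p.length := by
  obtain ⟨S, hS, hcard⟩ := exists_hasClosedPath hG hδ
  have hmin : 3 ≤ min (Nat.card V) (2 * d) := le_min hG.1 (by omega)
  obtain ⟨u, p, hp, hlen⟩ := hS.exists_isCycle (hmin.trans hcard)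
  exact ⟨u, p, hp, hcard.trans_eq hlen.symm⟩

/-! ### Graphs of large minimum degree -/

theorem exists_common_neighbor_ne [Finite V] {d : ℕ} (hcard : Nat.card V ≤ 2 * d)
    (hδ : ∀ v, d ≤ (G.neighborSet v).ncard) {u v : V} (huv : u ≠ v) (hadj : ¬ G.Adj u v) (z : V) :
    ∃ w, w ≠ z ∧ G.Adj u w ∧ G.Adj w v := by
  have hunion : G.neighborSet u ∪ G.neighborSet v ⊆ {u, v}ᶜ := by
    rintro w (hw | hw) (rfl | rfl)
    exacts [hw.ne rfl, hadj hw, hadj hw.symm, hw.ne rfl]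
  have hle := Set.ncard_le_ncard hunion
  have hcompl := Set.ncard_add_ncard_compl {u, v}
  rw [Set.ncard_pair huv] at hcompl
  have hinter := Set.ncard_union_add_ncard_inter (G.neighborSet u) (G.neighborSet v)
  have hδu := hδ u
  have hδv := hδ v
  obtain ⟨w, ⟨hu, hv⟩, hwz⟩ :=
    Set.exists_ne_of_one_lt_ncard (s := G.neighborSet u ∩ G.neighborSet v) (by omega) z
  exact ⟨w, hwz, hu, hv.symm⟩

theorem isTwoConnected_of_card_le_two_mul [Finite V] {d : ℕ} (hV : 3 ≤ Nat.card V)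
    (hcard : Nat.card V ≤ 2 * d) (hδ : ∀ v, d ≤ (G.neighborSet v).ncard) : G.IsTwoConnected := by
  have : Nontrivial V := Finite.one_lt_card_iff_nontrivial.1 (by omega)
  have hwalk : ∀ z u v, u ≠ v → G.Adj u v ∨ ∃ w, w ≠ z ∧ G.Adj u w ∧ G.Adj w v := fun z u v huv =>
    or_iff_not_imp_left.2 fun hadj => exists_common_neighbor_ne hcard hδ huv hadj z
  refine ⟨hV, ⟨fun u v => ?_⟩, fun z => ?_⟩
  · obtain rfl | huv := eq_or_ne u v
    · exact .rfl
    obtain h | ⟨w, -, huw, hwv⟩ := hwalk u u v huv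
    · exact h.reachable
    · exact huw.reachable.trans hwv.reachable
  · obtain ⟨x, hx⟩ := exists_ne z
    have : Nonempty ({z}ᶜ : Set V) := ⟨⟨x, hx⟩⟩
    refine ⟨fun u v => ?_⟩
    obtain rfl | huv := eq_or_ne u v
    · exact .rfl
    obtain h | ⟨w, hw, huw, hwv⟩ := hwalk z u v (Subtype.coe_ne_coe.2 huv)
    · exact Adj.reachable h
    · have huw' : (G.induce {z}ᶜ).Adj u ⟨w, hw⟩ := huw
      have hwv' : (G.induce {z}ᶜ).Adj ⟨w, hw⟩ v := hwv
      exact huw'.reachable.trans hwv'.reachable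

namespace IsCycleSeq

variable {v : ℕ → V} {n : ℕ}

theorem range_eq_univ [Finite V] (hv : IsCycleSeq G v n) (hn : Nat.card V ≤ n) :
    Set.range v = Set.univ := by
  refine Set.eq_of_subset_of_ncard_le (Set.subset_univ _) ?_
  calc (Set.univ : Set V).ncard ≤ (Set.Iio n).ncard := by simpa using hn
    _ = (v '' Set.Iio n).ncard := hv.injOn.ncard_image.symm
    _ ≤ (Set.range v).ncard := Set.ncard_le_ncard (Set.image_subset_range v _)

theorem of_induce {s : Set V} {v : ℕ → s} (hv : IsCycleSeq (G.induce s) v n) :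
    IsCycleSeq G (fun i => (v i : V)) n where
  periodic := hv.periodic.comp _
  injOn := Subtype.val_injective.comp_injOn hv.injOn
  adj := hv.adj

end IsCycleSeq

theorem exists_hamiltonian_isCycleSeq [Finite V] {d : ℕ} (hV : 3 ≤ Nat.card V)
    (hcard : Nat.card V ≤ 2 * d) (hδ : ∀ v, d ≤ (G.neighborSet v).ncard) :
    ∃ v n, 3 ≤ n ∧ IsCycleSeq G v n ∧ Set.range v = Set.univ := by
  obtain ⟨u, p, hp, hlen⟩ := exists_isCycle_min_card_le_length
    (isTwoConnected_of_card_le_two_mul hV hcard hδ) (by omega) hδ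
  have hv := isCycleSeq_getVert_mod hp
  exact ⟨_, _, hp.three_le_length, hv, hv.range_eq_univ (min_eq_left hcard ▸ hlen)⟩

theorem ncard_neighborSet_induce (G : SimpleGraph V) (s : Set V) (x : s) :
    ((G.induce s).neighborSet x).ncard = (G.neighborSet x ∩ s).ncard := by
  rw [← Set.ncard_image_of_injective _ Subtype.val_injective]
  congr 1
  ext y
  simp [and_comm]

/-! ### Connecting colorings -/

theorem exists_isKColorConnecting {k : ℕ} (hk : 0 < k) {c : Sym2 V → ℕ}
    (hc : PairwiseLinked G (fun E => Set.Iio k ⊆ c '' E) Set.univ) :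
    ∃ c' : Sym2 V → ℕ, G.IsKColorConnecting k c' ∧ Set.range c' ⊆ Set.Iio k := by
  refine ⟨fun e => if c e < k then c e else 0, fun u v huv => ?_, ?_⟩
  · obtain ⟨-, -, E, ⟨p, hp, -, hpE⟩, hE⟩ := hc (Set.mem_univ u) (Set.mem_univ v) huv
    refine ⟨p, hp, ?_⟩
    conv_lhs => rw [← Finset.card_range k]
    refine Finset.card_le_card fun i hi => ?_
    obtain ⟨e, he, rfl⟩ := hE (Finset.mem_range.1 hi)
    exact List.mem_toFinset.2 (List.mem_map.2 ⟨e, hpE e he, if_pos (Finset.mem_range.1 hi)⟩)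
  · rintro _ ⟨e, rfl⟩
    dsimp only
    split_ifs with he
    exacts [he, hk]

theorem le_ncard_image_edgeSet [Finite V] [Nontrivial V] {k : ℕ} {c : Sym2 V → ℕ}
    (hc : G.IsKColorConnecting k c) : k ≤ (c '' G.edgeSet).ncard := by
  obtain ⟨u, v, huv⟩ := exists_pair_ne V
  obtain ⟨p, -, hk⟩ := hc u v huv
  refine hk.trans ?_
  rw [← Set.ncard_coe_finset]
  refine Set.ncard_le_ncard (fun i hi => ?_) (Set.toFinite _)
  obtain ⟨e, he, rfl⟩ := List.mem_map.1 (List.mem_toFinset.1 hi)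
  exact ⟨e, p.edges_subset_edgeSet he, rfl⟩

theorem ccConn_eq_of_range_subset [Finite V] [Nontrivial V] {k : ℕ} {c : Sym2 V → ℕ}
    (hc : G.IsKColorConnecting k c) (hrange : Set.range c ⊆ Set.Iio k) : G.ccConn k = k := by
  have hcard : (c '' G.edgeSet).ncard ≤ k := by
    simpa using Set.ncard_le_ncard ((Set.image_subset_range c G.edgeSet).trans hrange)
  have hmem : ∃ c, G.IsKColorConnecting k c ∧ (c '' G.edgeSet).ncard = k :=
    ⟨c, hc, hcard.antisymm (le_ncard_image_edgeSet hc)⟩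
  refine (Nat.sInf_le hmem).antisymm (le_csInf ⟨k, hmem⟩ ?_)
  rintro _ ⟨c', hc', rfl⟩
  exact le_ncard_image_edgeSet hc'

theorem exists_pairwiseLinked_of_two_mul_le_card [Finite V] (hG : G.IsTwoConnected) {k : ℕ}
    (hk : 2 ≤ k) (hcard : 2 * k ≤ Nat.card V) (hδ : ∀ v, k ≤ (G.neighborSet v).ncard) :
    ∃ c : Sym2 V → ℕ, PairwiseLinked G (fun E => Set.Iio k ⊆ c '' E) Set.univ := by
  obtain ⟨u, p, hp, hlen⟩ := exists_isCycle_min_card_le_length hG hk hδ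
  rw [min_eq_right hcard] at hlen
  have hv := isCycleSeq_getVert_mod hp
  obtain ⟨c, hc⟩ := hv.exists_pairwiseLinked hp.three_le_length hlen
  exact ⟨c, hc.univ hG (fun E E' h hE => hE.trans (Set.image_mono h))
    ⟨_, ⟨0, rfl⟩, _, ⟨1, rfl⟩, (hv.adj 0).ne⟩⟩

theorem exists_pairwiseLinked_of_card_lt_two_mul [Finite V] {k : ℕ} (hV : 4 ≤ Nat.card V)
    (hcard : Nat.card V < 2 * k) (hδ : ∀ v, k ≤ (G.neighborSet v).ncard) :
    ∃ c : Sym2 V → ℕ, PairwiseLinked G (fun E => Set.Iio k ⊆ c '' E) Set.univ := by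
  obtain ⟨z⟩ : Nonempty V := (Nat.card_pos_iff.1 (by omega)).1
  have hcompl : Nat.card ({z}ᶜ : Set V) + 1 = Nat.card V := by
    rw [Nat.card_coe_set_eq, ← Set.ncard_add_ncard_compl {z}, Set.ncard_singleton, add_comm]
  obtain ⟨v, n, hn, hv, hrange⟩ := exists_hamiltonian_isCycleSeq (G := G.induce {z}ᶜ) (d := k - 1)
    (by omega) (by omega) fun x => by
      rw [ncard_neighborSet_induce, ← Set.sdiff_eq]
      exact (Nat.sub_le_sub_right (hδ x) 1).trans (Set.pred_ncard_le_ncard_sdiff_singleton _ z)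
  have hrim : Set.range (fun i => (v i : V)) = {z}ᶜ := by
    rw [← Function.comp_def, Set.range_comp, hrange, Set.image_univ, Subtype.range_coe]
  obtain ⟨c, hc⟩ := hv.of_induce.exists_pairwiseLinked_wheel (k := k) (z := z) hn (by simp [hrim])
    (by omega) (by
      rw [hrim, Set.inter_eq_left.2 (Set.subset_compl_singleton_iff.2 G.notMem_neighborSet_self)]
      exact hδ z)
  rw [hrim, Set.insert_eq, Set.union_compl_self] at hc
  exact ⟨c, hc⟩

end

theorem stmt_11 {V : Type*} [Fintype V] (G : SimpleGraph V) (k : ℕ) (hk : 2 ≤ k)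
    (hn : 4 ≤ Fintype.card V) (hG : G.IsTwoConnected)
    (hδ : ∀ v : V, k ≤ (G.neighborSet v).ncard) :
    G.KColorConnectable k ∧ G.ccConn k = k := by
  rw [← Nat.card_eq_fintype_card] at hn
  have : Nontrivial V := Finite.one_lt_card_iff_nontrivial.1 (by omega)
  obtain ⟨c, hc⟩ :
      ∃ c : Sym2 V → ℕ, PairwiseLinked G (fun E => Set.Iio k ⊆ c '' E) Set.univ := by
    obtain hcard | hcard := le_or_gt (2 * k) (Nat.card V)
    · exact exists_pairwiseLinked_of_two_mul_le_card hG hk hcard hδ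
    · exact exists_pairwiseLinked_of_card_lt_two_mul hn hcard hδ
  obtain ⟨c', hc', hrange⟩ := exists_isKColorConnecting (by omega) hc
  exact ⟨⟨c', hc'⟩, ccConn_eq_of_range_subset hc' hrange⟩
end

section
/- Let k ≥ 2 and let G be a finite 2-connected simple graph of order n ≥ 2k−1 with m edges, where m ≥ (k−1)(n−1)+1. Then G is k-color connectable and cc_k(G) ≤ 2k−1. -/
open SimpleGraph

/-!
A graph with more than `l (n - 1) / 2` edges contains a cycle longer than `l` (Erdős–Gallai); for
`l = 2k - 2` this yields a cycle `C` of length at least `2k - 1`, which is coloured with exactly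
`2k - 1` colours, the remaining edges reusing one of them. By 2-connectedness any two vertices are
joined to `C` by two disjoint paths, ending at distinct vertices `x` and `y` of `C`. One of the two
arcs of `C` between `x` and `y` carries at least `k` colours, since together they carry `2k - 1`.

For the Erdős–Gallai bound, take a longest path `p` and let `S` be the set of possible first
vertices of a path obtained by rearranging only the first `l` vertices of `p`. If all cycles have
length at most `l`, every neighbour of `x ∈ S` lies among these `l` vertices, and a Pósa rotation
makes the predecessor of that neighbour a member of `S`. Hence `deg x ≤ |S|`, so that
`deg x + |N(x) \ S| ≤ l`, and deleting `S` destroys at most `l |S| / 2` edges.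
-/

namespace ColorConnection

open scoped Finset

variable {V : Type*} {G : SimpleGraph V}

section LongCycles

variable {u w x : V} {U : Finset V} {l : ℕ}

/-- `p` is a longest path among the paths of `G` with all vertices in `U`. -/
structure IsLongestPathIn (U : Finset V) (p : G.Walk u w) : Prop where
  isPath : p.IsPath
  support_subset : ∀ z ∈ p.support, z ∈ U
  length_le : ∀ {a b : V} (q : G.Walk a b), q.IsPath → (∀ z ∈ q.support, z ∈ U) →
    q.length ≤ p.length

/-- `q` visits the same vertices as `p`, in an order that differs only among the first `l`. -/
structure IsPrefixRearrangement (l : ℕ) (q : G.Walk x w) (p : G.Walk u w) : Prop where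
  perm : q.support.Perm p.support
  drop_eq : q.support.drop l = p.support.drop l

lemma exists_isLongestPathIn (G : SimpleGraph V) (hU : U.Nonempty) :
    ∃ (u w : V) (p : G.Walk u w), IsLongestPathIn U p := by
  have : Nonempty (U : Set V) := hU.to_subtype
  obtain ⟨u, w, p, hp, hmax⟩ :=
    Walk.exists_isPath_forall_isPath_length_le_length (G.induce (U : Set V))
  refine ⟨_, _, p.map (Embedding.induce (U : Set V)).toHom, ?_, ?_, ?_⟩
  · exact hp.map Subtype.val_injective
  · intro z hz
    obtain ⟨z', -, rfl⟩ := List.mem_map.1 (Walk.support_map _ p ▸ hz)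
    exact z'.2
  · intro a b q hq hqU
    have hq' : (q.induce (U : Set V) hqU).IsPath :=
      Walk.IsPath.of_map (f := (Embedding.induce (U : Set V)).toHom)
        (by rwa [Walk.map_induce])
    have := hmax _ _ _ hq'
    rw [← Walk.length_map (Embedding.induce (U : Set V)).toHom, Walk.map_induce] at this
    exact this.trans_eq (Walk.length_map _ p).symm

lemma IsLongestPathIn.of_perm {p : G.Walk u w} (hp : IsLongestPathIn U p) {q : G.Walk x w}
    (hqp : q.support.Perm p.support) : IsLongestPathIn U q where
  isPath := .mk' (hqp.nodup_iff.2 hp.isPath.support_nodup)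
  support_subset z hz := hp.support_subset z (hqp.mem_iff.1 hz)
  length_le r hr hrU := by
    have hlen := hqp.length_eq
    have := hp.length_le r hr hrU
    simp only [Walk.length_support] at hlen
    lia

lemma IsLongestPathIn.mem_support_of_adj {p : G.Walk u w} (hp : IsLongestPathIn U p) {y : V}
    (hy : y ∈ U) (h : G.Adj u y) : y ∈ p.support := by
  by_contra hyp
  have := hp.length_le (Walk.cons h.symm p) (hp.isPath.cons hyp)
    (by simpa [hy] using hp.support_subset)
  simp at this

lemma exists_isCycle_of_adj_getVert {p : G.Walk u w} (hp : p.IsPath) {i : ℕ} (hi : 2 ≤ i)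
    (hip : i ≤ p.length) (h : G.Adj u (p.getVert i)) :
    ∃ c : G.Walk (p.getVert i) (p.getVert i), c.IsCycle ∧ c.length = i + 1 := by
  refine ⟨Walk.cons h.symm (p.take i), ?_, by simpa using hip⟩
  rw [Walk.isCycle_iff_isPath_tail_and_le_length]
  exact ⟨by simpa using hp.take i, by simp; lia⟩

lemma IsLongestPathIn.exists_getVert_succ_eq_of_adj (hl : 2 ≤ l)
    (hc : ∀ (v : V) (c : G.Walk v v), c.IsCycle → c.length ≤ l) {p : G.Walk u w}
    (hp : IsLongestPathIn U p) {y : V} (hy : y ∈ U) (h : G.Adj u y) :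
    ∃ i < p.length, i + 1 < l ∧ p.getVert (i + 1) = y := by
  obtain ⟨j, rfl, hj⟩ := Walk.mem_support_iff_exists_getVert.1 (hp.mem_support_of_adj hy h)
  obtain _ | i := j
  · simp at h
  refine ⟨i, hj, ?_, rfl⟩
  by_contra! hli
  obtain ⟨c, hcyc, hlen⟩ := exists_isCycle_of_adj_getVert hp.isPath (hl.trans hli) hj h
  have := hc _ c hcyc
  lia

lemma exists_walk_support_eq_reverse_take_append_drop (p : G.Walk u w) {i : ℕ} (hi : i < p.length)
    (h : G.Adj u (p.getVert (i + 1))) :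
    ∃ q : G.Walk (p.getVert i) w,
      q.support = (p.support.take (i + 1)).reverse ++ p.support.drop (i + 1) := by
  refine ⟨(p.take i).reverse.append (Walk.cons h (p.drop (i + 1))), ?_⟩
  simp [Walk.support_append, Walk.support_take, Nat.min_eq_left (Nat.succ_le_of_lt hi)]

lemma IsPrefixRearrangement.exists_posa_rotation {p : G.Walk u w} {q : G.Walk x w}
    (hqp : IsPrefixRearrangement l q p) {i : ℕ} (hi : i < q.length) (hil : i + 1 < l)
    (h : G.Adj x (q.getVert (i + 1))) :
    ∃ r : G.Walk (q.getVert i) w, IsPrefixRearrangement l r p := by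
  obtain ⟨r, hr⟩ := exists_walk_support_eq_reverse_take_append_drop q hi h
  refine ⟨r, ?_, ?_⟩
  · calc r.support.Perm (q.support.take (i + 1) ++ q.support.drop (i + 1)) :=
          hr ▸ (List.reverse_perm _).append_right _
      _ = q.support := List.take_append_drop _ _
      List.Perm _ p.support := hqp.perm
  · have hlen : (q.support.take (i + 1)).reverse.length = i + 1 := by simpa using hi.le
    rw [hr, ← hqp.drop_eq, List.drop_append, List.drop_eq_nil_of_le (by lia), List.nil_append,
      List.drop_drop, hlen]
    congr 1
    lia

lemma IsPrefixRearrangement.perm_take {p : G.Walk u w} {q : G.Walk x w}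
    (hqp : IsPrefixRearrangement l q p) :
    (q.support.take l).Perm (p.support.take l) := by
  have h := hqp.perm
  rw [← List.take_append_drop l q.support, ← List.take_append_drop l p.support, hqp.drop_eq] at h
  exact (List.perm_append_right_iff _).1 h

lemma getVert_mem_take_support {p : G.Walk u w} {i : ℕ} (hi : i ≤ p.length) (hil : i < l) :
    p.getVert i ∈ p.support.take l := by
  rw [p.getVert_eq_support_getElem hi]
  exact List.mem_take_iff_getElem.2 ⟨i, by simp; lia, rfl⟩

variable [DecidableRel G.Adj]

open Classical in
lemma IsLongestPathIn.card_adj_le_card_starts (hl : 2 ≤ l)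
    (hc : ∀ (v : V) (c : G.Walk v v), c.IsCycle → c.length ≤ l) {p : G.Walk u w}
    (hp : IsLongestPathIn U p) {q : G.Walk x w} (hqp : IsPrefixRearrangement l q p) :
    #{y ∈ U | G.Adj x y} ≤ #{z ∈ U | ∃ r : G.Walk z w, IsPrefixRearrangement l r p} := by
  have hq := hp.of_perm hqp.perm
  refine Finset.card_le_card_of_forall_subsingleton
    (fun y z ↦ ∃ i < q.length, q.getVert i = z ∧ q.getVert (i + 1) = y) ?_ ?_
  · intro y hy
    obtain ⟨hyU, hxy⟩ := Finset.mem_filter.1 hy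
    obtain ⟨i, hi, hil, rfl⟩ := hq.exists_getVert_succ_eq_of_adj hl hc hyU hxy
    refine ⟨q.getVert i, Finset.mem_filter.2 ⟨?_, hqp.exists_posa_rotation hi hil hxy⟩,
      i, hi, rfl, rfl⟩
    exact hq.support_subset _ (q.getVert_mem_support i)
  · rintro z - _ ⟨-, i, hi, rfl, rfl⟩ _ ⟨-, j, hj, hij, rfl⟩
    rw [hq.isPath.getVert_injOn hj.le hi.le hij]

lemma exists_subset_card_adj_add_card_adj_sdiff_le [DecidableEq V] (hl : 2 ≤ l)
    (hc : ∀ (v : V) (c : G.Walk v v), c.IsCycle → c.length ≤ l) (hU : U.Nonempty) :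
    ∃ S ⊆ U, S.Nonempty ∧ #S ≤ l ∧
      ∀ x ∈ S, #{y ∈ U | G.Adj x y} + #{y ∈ U \ S | G.Adj x y} ≤ l := by
  classical
  obtain ⟨u, w, p, hp⟩ := exists_isLongestPathIn G hU
  set S : Finset V := {x ∈ U | ∃ q : G.Walk x w, IsPrefixRearrangement l q p}
  set B : Finset V := (p.support.take l).toFinset with hB
  have hBcard : #B ≤ l := (List.toFinset_card_le _).trans (List.length_take_le _ _)
  have hSB : S ⊆ B := by
    intro x hx
    obtain ⟨-, q, hq⟩ := Finset.mem_filter.1 hx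
    rw [hB, List.mem_toFinset, ← hq.perm_take.mem_iff]
    simpa using getVert_mem_take_support q.length.zero_le (zero_lt_two.trans_le hl)
  refine ⟨S, Finset.filter_subset _ _, ⟨u, ?_⟩, (Finset.card_le_card hSB).trans hBcard, ?_⟩
  · exact Finset.mem_filter.2 ⟨hp.support_subset u p.start_mem_support, p, .refl _, rfl⟩
  intro x hx
  obtain ⟨-, q, hq⟩ := Finset.mem_filter.1 hx
  have hadjS : #{y ∈ U | G.Adj x y} ≤ #S := hp.card_adj_le_card_starts hl hc hq
  have hadjB : {y ∈ U \ S | G.Adj x y} ⊆ B \ S := by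
    intro y hy
    obtain ⟨hyUS, hxy⟩ := Finset.mem_filter.1 hy
    obtain ⟨hyU, hyS⟩ := Finset.mem_sdiff.1 hyUS
    obtain ⟨i, hi, hil, rfl⟩ := (hp.of_perm hq.perm).exists_getVert_succ_eq_of_adj hl hc hyU hxy
    rw [Finset.mem_sdiff, hB, List.mem_toFinset, ← hq.perm_take.mem_iff]
    exact ⟨getVert_mem_take_support hi hil, hyS⟩
  have := Finset.card_le_card hadjB
  have := Finset.card_sdiff_add_card_eq_card hSB
  lia

lemma sum_card_adj_eq_sum_sdiff_add_sum [DecidableEq V] {S : Finset V} (hSU : S ⊆ U) :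
    ∑ u ∈ U, #{v ∈ U | G.Adj u v} = ∑ u ∈ U \ S, #{v ∈ U \ S | G.Adj u v} +
      ∑ u ∈ S, (#{v ∈ U | G.Adj u v} + #{v ∈ U \ S | G.Adj u v}) := by
  have hsplit (u : V) :
      #{v ∈ U | G.Adj u v} = #{v ∈ U \ S | G.Adj u v} + #{v ∈ S | G.Adj u v} := by
    simp only [Finset.card_filter, Finset.sum_sdiff hSU]
  have hswap : ∑ u ∈ U \ S, #{v ∈ S | G.Adj u v} = ∑ u ∈ S, #{v ∈ U \ S | G.Adj u v} := by
    simp only [Finset.card_filter]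
    rw [Finset.sum_comm]
    simp only [G.adj_comm]
  calc ∑ u ∈ U, #{v ∈ U | G.Adj u v}
      = ∑ u ∈ U \ S, (#{v ∈ U \ S | G.Adj u v} + #{v ∈ S | G.Adj u v}) +
          ∑ u ∈ S, #{v ∈ U | G.Adj u v} := by
        rw [← Finset.sum_sdiff hSU, Finset.sum_congr rfl fun u _ ↦ hsplit u]
    _ = _ := by rw [Finset.sum_add_distrib, Finset.sum_add_distrib, hswap]; ring

lemma sum_card_adj_le (U : Finset V) : ∑ u ∈ U, #{v ∈ U | G.Adj u v} ≤ #U * (#U - 1) := by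
  classical
  refine Finset.sum_le_card_nsmul _ _ _ fun u hu ↦ ?_
  rw [← Finset.card_erase_of_mem hu]
  exact Finset.card_le_card fun v hv ↦
    Finset.mem_erase.2 ⟨(Finset.mem_filter.1 hv).2.ne', (Finset.mem_filter.1 hv).1⟩

lemma sum_card_adj_le_of_forall_isCycle_length_le (hl : 2 ≤ l)
    (hc : ∀ (v : V) (c : G.Walk v v), c.IsCycle → c.length ≤ l) (U : Finset V) :
    ∑ u ∈ U, #{v ∈ U | G.Adj u v} ≤ l * (#U - 1) := by
  classical
  induction U using Finset.strongInduction with | H U ih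
  obtain rfl | hU := U.eq_empty_or_nonempty
  · simp
  obtain ⟨S, hSU, hSne, hSl, hS⟩ := exists_subset_card_adj_add_card_adj_sdiff_le hl hc hU
  obtain rfl | hSU' := hSU.eq_or_ssubset
  · calc _ ≤ #S * (#S - 1) := sum_card_adj_le S
      _ ≤ l * (#S - 1) := Nat.mul_le_mul_right _ hSl
  have hcard := Finset.card_sdiff_add_card_eq_card hSU
  have hpos : 0 < #(U \ S) := (Finset.sdiff_nonempty.2 hSU'.not_subset).card_pos
  calc ∑ u ∈ U, #{v ∈ U | G.Adj u v}
      = ∑ u ∈ U \ S, #{v ∈ U \ S | G.Adj u v} +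
          ∑ u ∈ S, (#{v ∈ U | G.Adj u v} + #{v ∈ U \ S | G.Adj u v}) :=
        sum_card_adj_eq_sum_sdiff_add_sum hSU
    _ ≤ l * (#(U \ S) - 1) + #S * l :=
        Nat.add_le_add (ih _ (Finset.sdiff_ssubset hSU hSne)) (Finset.sum_le_card_nsmul _ _ _ hS)
    _ = l * (#(U \ S) - 1 + #S) := by ring
    _ = l * (#U - 1) := by congr 1; lia

end LongCycles

theorem exists_isCycle_lt_length [Fintype V] (G : SimpleGraph V) {l : ℕ} (hl : 2 ≤ l)
    (hm : l * (Fintype.card V - 1) < 2 * G.edgeSet.ncard) :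
    ∃ (x : V) (c : G.Walk x x), c.IsCycle ∧ l < c.length := by
  classical
  by_contra! hc
  have hsum := sum_card_adj_le_of_forall_isCycle_length_le hl hc Finset.univ
  rw [← G.coe_edgeFinset, Set.ncard_coe_finset, ← G.sum_degrees_eq_twice_card_edges] at hm
  have hdeg (u : V) : #{v | G.Adj u v} = G.degree u := by
    rw [← G.card_neighborFinset_eq_degree, G.neighborFinset_eq_filter]
  simp only [hdeg, Finset.card_univ] at hsum
  exact hm.not_ge hsum

section Linkage

/-- `u` and `v` are joined to `B` by two vertex-disjoint walks, equivalently by two vertex-disjoint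
paths. -/
def DisjointlyLinked (G : SimpleGraph V) (B : Set V) (u v : V) : Prop :=
  ∃ x ∈ B, ∃ y ∈ B, ∃ (P : G.Walk u x) (Q : G.Walk v y), P.support.Disjoint Q.support

variable {B : Set V} {a b u v : V}

lemma exists_isPath_forall_mem_eq_end (p : G.Walk u b) (hb : b ∈ B) :
    ∃ x ∈ B, ∃ q : G.Walk u x, q.IsPath ∧ q.support ⊆ p.support ∧
      ∀ z ∈ q.support, z ∈ B → z = x := by
  classical
  induction p with
  | nil => exact ⟨_, hb, Walk.nil, .nil, by simp, by simp⟩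
  | @cons u u' b h p ih =>
    by_cases hu : u ∈ B
    · exact ⟨u, hu, Walk.nil, .nil, by simp, by simp⟩
    obtain ⟨x, hx, q, -, hqp, hqB⟩ := ih hb
    have hsub := (Walk.cons h q).support_bypass_subset_support
    refine ⟨x, hx, (Walk.cons h q).bypass, Walk.bypass_isPath _, fun z hz ↦ ?_, fun z hz hzB ↦ ?_⟩
    · exact List.cons_subset_cons u hqp (hsub hz)
    · obtain rfl | hzq := List.mem_cons.1 (hsub hz)
      · exact absurd hzB hu
      · exact hqB z hzq hzB

lemma exists_walk_notMem_support (ha : (G.induce {a}ᶜ).Preconnected) (hu : u ≠ a) (hv : v ≠ a) :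
    ∃ p : G.Walk u v, a ∉ p.support := by
  obtain ⟨p⟩ := ha ⟨u, hu⟩ ⟨v, hv⟩
  refine ⟨p.map (Embedding.induce ({a}ᶜ : Set V)).toHom, fun h ↦ ?_⟩
  obtain ⟨z, -, hz⟩ := List.mem_map.1 (Walk.support_map _ p ▸ h)
  exact z.2 hz

variable (hG : ∀ a : V, (G.induce {a}ᶜ).Preconnected)
include hG

lemma disjointlyLinked_of_mem (hB : B.Nontrivial) (hb : b ∈ B) (hv : v ≠ b) :
    DisjointlyLinked G B b v := by
  obtain ⟨b', hb', hne⟩ := hB.exists_ne b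
  obtain ⟨Q, hQ⟩ := exists_walk_notMem_support (hG b) hv hne
  exact ⟨b, hb, b', hb', Walk.nil, Q, by simpa using hQ⟩

/-- A walk from `v` that avoids `u` must first hit one of the two given walks; it is continued along
that walk, while `u` uses the other one. -/
lemma DisjointlyLinked.of_adj (h : DisjointlyLinked G B u a) (hau : G.Adj a u) (hv : v ≠ a) :
    DisjointlyLinked G B a v := by
  classical
  obtain ⟨x, hx, y, hy, P, Q₀, hPQ₀⟩ := h
  obtain ⟨Q, hQ, hPQ⟩ : ∃ Q : G.Walk a y, Q.IsPath ∧ P.support.Disjoint Q.support :=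
    ⟨Q₀.bypass, Q₀.bypass_isPath, fun _ hzP hzQ ↦
      hPQ₀ hzP (Q₀.support_bypass_subset_support hzQ)⟩
  obtain ⟨R₀, haR₀⟩ := exists_walk_notMem_support (hG a) hv hau.ne'
  obtain ⟨w, hw, R, -, hRR₀, hRw⟩ := exists_isPath_forall_mem_eq_end
    (B := {z | z ∈ P.support ∨ z ∈ Q.support}) R₀ (.inl P.start_mem_support)
  have haR : a ∉ R.support := fun h ↦ haR₀ (hRR₀ h)
  obtain hwP | hwQ := hw
  · refine ⟨y, hy, x, hx, Q, R.append (P.dropUntil w hwP), fun z hzQ hz ↦ ?_⟩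
    obtain hzR | hzP := (Walk.mem_support_append_iff _ _).1 hz
    · exact hPQ (hRw z hzR (.inr hzQ) ▸ hwP) hzQ
    · exact hPQ (P.support_dropUntil_subset_support hwP hzP) hzQ
  · cases Q with
    | nil => exact absurd R.end_mem_support (List.mem_singleton.1 hwQ ▸ haR)
    | cons h Q =>
    have hwa : w ≠ a := fun h ↦ haR (h ▸ R.end_mem_support)
    have haQ : a ∉ Q.support := ((Walk.cons_isPath_iff h Q).1 hQ).2
    have hwQ : w ∈ Q.support := (List.mem_cons.1 hwQ).resolve_left hwa
    refine ⟨x, hx, y, hy, Walk.cons hau P, R.append (Q.dropUntil w hwQ), fun z hzP hz ↦ ?_⟩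
    have hz : z ∈ R.support ∨ z ∈ Q.support := ((Walk.mem_support_append_iff _ _).1 hz).imp_right
      (Q.support_dropUntil_subset_support hwQ ·)
    obtain rfl | hzP := List.mem_cons.1 hzP
    · exact hz.elim haR haQ
    · obtain hzR | hzQ := hz
      · exact hPQ hzP (hRw z hzR (.inl hzP) ▸ List.mem_cons_of_mem a hwQ)
      · exact hPQ hzP (List.mem_cons_of_mem a hzQ)

theorem disjointlyLinked_of_ne (hconn : G.Preconnected) (hB : B.Nontrivial) (huv : u ≠ v) :
    DisjointlyLinked G B u v := by
  obtain ⟨b, hb⟩ := hB.nonempty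
  obtain ⟨p⟩ := hconn u b
  induction p generalizing v with
  | nil => exact disjointlyLinked_of_mem hG hB hb huv.symm
  | cons h _ ih => exact (ih h.ne' hb).of_adj hG h huv.symm

end Linkage

section Cycles

variable {r x y : V} {C : G.Walk r r}

lemma isPath_append {u v w : V} {p : G.Walk u v} {q : G.Walk v w} (hp : p.IsPath) (hq : q.IsPath)
    (h : ∀ z ∈ p.support, z ∈ q.support → z = v) : (p.append q).IsPath := by
  have hqv := hq.support_nodup
  rw [← q.cons_tail_support, List.nodup_cons] at hqv
  rw [Walk.isPath_def, Walk.support_append, List.nodup_append']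
  refine ⟨hp.support_nodup, hqv.2, fun z hzp hzq ↦ hqv.1 ?_⟩
  obtain rfl := h z hzp (List.mem_of_mem_tail hzq)
  exact hzq

lemma exists_isPath_edges_subset_of_isCycle (hC : C.IsCycle) (hx : x ∈ C.support)
    (hy : y ∈ C.support) (hxy : x ≠ y) :
    ∃ P Q : G.Walk x y, P.IsPath ∧ Q.IsPath ∧ P.support ⊆ C.support ∧ Q.support ⊆ C.support ∧
      C.edges ⊆ P.edges ++ Q.edges := by
  classical
  have hyr : y ∈ (C.rotate x hx).support := (C.mem_support_rotate_iff x hx).2 hy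
  obtain ⟨P, Q, hPQ⟩ := Walk.mem_support_iff_exists_append.1 hyr
  have hcycle : (P.append Q).IsCycle := hPQ ▸ hC.rotate hx
  have hsupp : (P.append Q).support ⊆ C.support := fun z hz ↦
    (C.mem_support_rotate_iff x hx).1 (hPQ ▸ hz)
  refine ⟨P, Q.reverse, hcycle.isPath_of_append_left (Walk.not_nil_of_ne hxy.symm),
    (hcycle.isPath_of_append_right (Walk.not_nil_of_ne hxy)).reverse, fun z hz ↦ hsupp ?_,
    fun z hz ↦ hsupp ?_, fun e he ↦ ?_⟩
  · exact (Walk.mem_support_append_iff _ _).2 (.inl hz)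
  · exact (Walk.mem_support_append_iff _ _).2 (.inr (by simpa using hz))
  · have : e ∈ (P.append Q).edges := hPQ ▸ (C.rotate_edges x hx).mem_iff.2 he
    simpa using this

lemma card_toFinset_map_le_of_subset {α β : Type*} [DecidableEq β] {s t : List α} (f : α → β)
    (h : s ⊆ t) : #(s.map f).toFinset ≤ #(t.map f).toFinset :=
  Finset.card_le_card fun _ hb ↦
    List.mem_toFinset.2 (List.map_subset f h (List.mem_toFinset.1 hb))

lemma exists_isPath_le_card_colors_of_isCycle (hC : C.IsCycle) {c : Sym2 V → ℕ} {k : ℕ}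
    (hc : 2 * k - 1 ≤ #(C.edges.map c).toFinset) (hx : x ∈ C.support) (hy : y ∈ C.support)
    (hxy : x ≠ y) :
    ∃ R : G.Walk x y, R.IsPath ∧ R.support ⊆ C.support ∧ k ≤ #(R.edges.map c).toFinset := by
  obtain ⟨P, Q, hP, hQ, hPC, hQC, hPQ⟩ := exists_isPath_edges_subset_of_isCycle hC hx hy hxy
  have hle := card_toFinset_map_le_of_subset c hPQ
  rw [List.map_append, List.toFinset_append] at hle
  have hunion := Finset.card_union_le (P.edges.map c).toFinset (Q.edges.map c).toFinset
  by_cases hk : k ≤ #(P.edges.map c).toFinset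
  · exact ⟨P, hP, hPC, hk⟩
  · exact ⟨Q, hQ, hQC, by lia⟩

lemma nontrivial_support_of_isCycle (hC : C.IsCycle) : {z | z ∈ C.support}.Nontrivial :=
  ⟨r, C.start_mem_support, C.snd, C.getVert_mem_support 1, (C.adj_snd hC.not_nil).ne⟩

theorem isKColorConnecting_of_isCycle (hconn : G.Preconnected)
    (hG : ∀ a : V, (G.induce {a}ᶜ).Preconnected) (hC : C.IsCycle) {c : Sym2 V → ℕ} {k : ℕ}
    (hc : 2 * k - 1 ≤ #(C.edges.map c).toFinset) : G.IsKColorConnecting k c := by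
  intro u v huv
  obtain ⟨x₀, hx₀, y₀, hy₀, P₀, Q₀, hPQ₀⟩ :=
    disjointlyLinked_of_ne hG hconn (nontrivial_support_of_isCycle hC) huv
  obtain ⟨x, hx, P, hP, hPP₀, hPC⟩ := exists_isPath_forall_mem_eq_end P₀ hx₀
  obtain ⟨y, hy, Q, hQ, hQQ₀, hQC⟩ := exists_isPath_forall_mem_eq_end Q₀ hy₀
  have hPQ : P.support.Disjoint Q.support := fun z hzP hzQ ↦ hPQ₀ (hPP₀ hzP) (hQQ₀ hzQ)
  have hxy : x ≠ y := by
    rintro rfl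
    exact hPQ P.end_mem_support Q.end_mem_support
  obtain ⟨R, hR, hRC, hk⟩ := exists_isPath_le_card_colors_of_isCycle hC hc hx hy hxy
  have hRQ : (R.append Q.reverse).IsPath :=
    isPath_append hR hQ.reverse fun z hzR hzQ ↦ hQC z (by simpa using hzQ) (hRC hzR)
  refine ⟨P.append (R.append Q.reverse), isPath_append hP hRQ fun z hzP hz ↦ ?_,
    hk.trans (card_toFinset_map_le_of_subset c fun e he ↦ by simp [he])⟩
  obtain hzR | hzQ := (Walk.mem_support_append_iff _ _).1 hz
  · exact hPC z hzP (hRC hzR)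
  · exact absurd (by simpa using hzQ) (hPQ hzP)

end Cycles

lemma exists_forall_lt_le_card_toFinset_map {α : Type*} {s : List α} (hs : s.Nodup) {N : ℕ}
    (hN : 0 < N) (hNs : N ≤ s.length) :
    ∃ c : α → ℕ, (∀ a, c a < N) ∧ N ≤ #(s.map c).toFinset := by
  classical
  refine ⟨fun a ↦ min (s.idxOf a) (N - 1), fun a ↦ by lia, ?_⟩
  calc N = #(Finset.range N) := (Finset.card_range N).symm
    _ ≤ _ := Finset.card_le_card fun i hi ↦ ?_
  have hi : i < N := Finset.mem_range.1 hi
  refine List.mem_toFinset.2 (List.mem_map.2 ⟨s[i], List.getElem_mem _, ?_⟩)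
  rw [hs.idxOf_getElem]
  lia

lemma ccConn_le_of_forall_lt {k N : ℕ} {c : Sym2 V → ℕ} (hc : G.IsKColorConnecting k c)
    (hN : ∀ e, c e < N) : G.ccConn k ≤ N :=
  calc G.ccConn k ≤ (c '' G.edgeSet).ncard := Nat.sInf_le ⟨c, hc, rfl⟩
    _ ≤ (Set.Iio N).ncard :=
      Set.ncard_le_ncard (Set.image_subset_iff.2 fun e _ ↦ hN e) (Set.finite_Iio N)
    _ = N := by simp

end ColorConnection

theorem stmt_13 {V : Type*} [Fintype V] (G : SimpleGraph V) (k : ℕ) (hk : 2 ≤ k)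
    (hn : 2 * k - 1 ≤ Fintype.card V) (hG : G.IsTwoConnected)
    (hm : (k - 1) * (Fintype.card V - 1) + 1 ≤ G.edgeSet.ncard) :
    G.KColorConnectable k ∧ G.ccConn k ≤ 2 * k - 1 := by
  have hedges : 2 * (k - 1) * (Fintype.card V - 1) < 2 * G.edgeSet.ncard := by
    rw [mul_assoc]; lia
  obtain ⟨r, C, hC, hlen⟩ := ColorConnection.exists_isCycle_lt_length G (by lia) hedges
  obtain ⟨c, hlt, hcard⟩ := ColorConnection.exists_forall_lt_le_card_toFinset_map
    hC.isTrail.edges_nodup (N := 2 * k - 1) (by lia) (by rw [C.length_edges]; lia)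
  have hc : G.IsKColorConnecting k c := ColorConnection.isKColorConnecting_of_isCycle
    hG.2.1.preconnected (fun v ↦ (hG.2.2 v).preconnected) hC hcard
  exact ⟨⟨c, hc⟩, ColorConnection.ccConn_le_of_forall_lt hc hlt⟩
end
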